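/- arXiv:1209.4632 — 2 statements merged into one kernel-verified Lean document; each statement's English description precedes it below -/
import Mathlib

section
/- The real polynomial Bohnenblust–Hille constants satisfy limsup_{m→∞} D_{ℝ,m}^{1/m} = 2. -/
open MvPolynomial Filter

/-- The sup norm of a real polynomial in `n` variables over the cube `[-1,1]^n`. -/
noncomputable def supNorm {n : ℕ} (P : MvPolynomial (Fin n) ℝ) : ℝ :=
  sSup {y : ℝ | ∃ x : Fin n → ℝ, (∀ i, |x i| ≤ 1) ∧ y = |eval x P|}

/-- The `ℓ_p` norm of the coefficients of a real polynomial. -/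
noncomputable def lpNorm {n : ℕ} (p : ℝ) (P : MvPolynomial (Fin n) ℝ) : ℝ :=
  (∑ α ∈ P.support, |coeff α P| ^ p) ^ (1 / p)

/-- The real polynomial Bohnenblust–Hille constant `D_{ℝ,m}`. -/
noncomputable def BHconst (m : ℕ) : ℝ :=
  sInf {D : ℝ | 0 < D ∧ ∀ (n : ℕ) (P : MvPolynomial (Fin n) ℝ),
    P.IsHomogeneous m → lpNorm (2 * m / (m + 1)) P ≤ D * supNorm P}

/-- The real polynomial Bohnenblust–Hille constant `D_{ℝ,m}(n)` in a fixed number `n`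
of variables. -/
noncomputable def BHconstN (m n : ℕ) : ℝ :=
  sInf {D : ℝ | 0 < D ∧ ∀ P : MvPolynomial (Fin n) ℝ,
    P.IsHomogeneous m → lpNorm (2 * m / (m + 1)) P ≤ D * supNorm P}

/-!
*Upper bound.* Passing from the cube to the complex torus costs at most `2 ^ m`: for `z` on the
torus, the polynomial `s ↦ P (z + s • conj z)` has value `P z` at `s = 0`, and for `|s| = 1` the
point `z + s • conj z` is a unimodular multiple of a real point of `[-2, 2]ⁿ`, so the maximum
modulus principle applies. On the torus the constant of complex `m`-homogeneous polynomials grows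
subexponentially. Fix `k`. Blei's interpolation bounds the `ℓ_{2m/(m+1)}` norm of the coefficients
by mixed norms in which only `k` cyclically consecutive indices carry the exponent `2k/(k+1)` and
the others carry `2`. The square sums over the latter are turned into `L^p` norms of `k`-th partial
derivatives by Khinchine's inequality on the torus, the `k`-linear inequality is applied pointwise,
and Cauchy's bound for derivatives closes the estimate with a constant `poly(m) * 2 ^ (m / k)`,
where `k` is arbitrary and any finite constant for `k`-linear forms will do.

*Lower bound.* If `|Q| ≤ 1` on the real cube then also `|Q(x)² - Q(y)²| ≤ 1`, whereas on the torus
the phases of the two blocks can be chosen so that the two squares add up: a modulus `a` of `Q`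
becomes `2 * a²`. Iterating yields a polynomial of degree `2 ^ n` with modulus `2 ^ (2 ^ n - 1)`.
Its powers have only polynomially many coefficients, so their coefficient norms are as large as
their moduli on the torus, up to a polynomial factor.
-/

namespace BohnenblustHille

open Finset hiding antidiagonal mem_antidiagonal
open Function Finset.HasAntidiagonal
open scoped NNReal ComplexConjugate BigOperators

section FiniteInequalities

variable {α β : Type*}

theorem sum_prod_rpow_le_prod_sum_rpow (s : Finset α) (t : Finset β) (f : β → α → ℝ≥0)
    {w : β → ℝ} (hw : ∀ b ∈ t, 0 ≤ w b) (hw_sum : ∑ b ∈ t, w b = 1) :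
    ∑ a ∈ s, ∏ b ∈ t, f b a ^ w b ≤ ∏ b ∈ t, (∑ a ∈ s, f b a) ^ w b := by
  let _ : MeasurableSpace α := ⊤
  have holder := ENNReal.lintegral_prod_norm_pow_le
    (μ := MeasureTheory.Measure.count.restrict (s : Set α)) t
    (f := fun b a => (f b a : ENNReal)) (fun _ _ => measurable_from_top.aemeasurable) hw_sum hw
  simp only [MeasureTheory.lintegral_finset, MeasureTheory.Measure.count_singleton,
    mul_one] at holder
  have h : ∀ b ∈ t, ∀ x : ℝ≥0, (x : ENNReal) ^ w b = ((x ^ w b : ℝ≥0) : ENNReal) :=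
    fun b hb x => (ENNReal.coe_rpow_of_nonneg x (hw b hb)).symm
  rw [← ENNReal.coe_le_coe]
  push_cast
  refine (sum_congr rfl fun a _ => prod_congr rfl fun b hb => (h b hb _).symm).trans_le
    (holder.trans_eq (prod_congr rfl fun b hb => ?_))
  rw [← h b hb, ENNReal.ofNNReal_finsetSum]

theorem Lq_prod_rpow_le_prod_Lp_rpow (s : Finset α) (t : Finset β) (f : β → α → ℝ≥0) {q : ℝ}
    {p w : β → ℝ} (hq : 0 < q) (hp : ∀ b ∈ t, 0 < p b) (hw : ∀ b ∈ t, 0 ≤ w b)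
    (h : 1 / q = ∑ b ∈ t, w b / p b) :
    (∑ a ∈ s, (∏ b ∈ t, f b a ^ w b) ^ q) ^ (1 / q) ≤
      ∏ b ∈ t, ((∑ a ∈ s, f b a ^ p b) ^ (1 / p b)) ^ w b := by
  have hweight : ∑ b ∈ t, q * w b / p b = 1 := by
    simp only [mul_div_assoc, ← mul_sum, ← h, mul_one_div_cancel hq.ne']
  have hinner : ∀ b ∈ t, ∀ y : ℝ≥0, (y ^ w b) ^ q = (y ^ p b) ^ (q * w b / p b) := fun b hb y => by
    have := (hp b hb).ne'
    rw [← NNReal.rpow_mul, ← NNReal.rpow_mul]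
    congr 1
    field_simp
  have houter : ∀ b (y : ℝ≥0), (y ^ (q * w b / p b)) ^ (1 / q) = (y ^ (1 / p b)) ^ w b :=
    fun b y => by
      rw [← NNReal.rpow_mul, ← NNReal.rpow_mul]
      congr 1
      field_simp
  calc _ = (∑ a ∈ s, ∏ b ∈ t, (f b a ^ p b) ^ (q * w b / p b)) ^ (1 / q) := by
        simp only [← NNReal.finsetProd_rpow]
        congr 1
        exact sum_congr rfl fun a _ => prod_congr rfl fun b hb => hinner b hb _
    _ ≤ (∏ b ∈ t, (∑ a ∈ s, f b a ^ p b) ^ (q * w b / p b)) ^ (1 / q) := by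
        gcongr
        exact sum_prod_rpow_le_prod_sum_rpow _ _ (fun b a => f b a ^ p b)
          (fun b hb => div_nonneg (mul_nonneg hq.le (hw b hb)) (hp b hb).le) hweight
    _ = _ := by simp only [← NNReal.finsetProd_rpow, houter]

theorem Lp_sum_le (s : Finset α) (t : Finset β) (f : β → α → ℝ≥0) {p : ℝ} (hp : 1 ≤ p) :
    (∑ a ∈ s, (∑ b ∈ t, f b a) ^ p) ^ (1 / p) ≤ ∑ b ∈ t, (∑ a ∈ s, f b a ^ p) ^ (1 / p) := by
  have hp0 : p ≠ 0 := by positivity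
  simpa using le_sum_of_subadditive (fun g : α → ℝ≥0 => (∑ a ∈ s, g a ^ p) ^ (1 / p))
    (by simp [hp0]) (fun g h => NNReal.Lp_add_le s g h hp) t f

theorem Lr_Lp_le_Lp_Lr (s : Finset α) (t : Finset β) (f : α → β → ℝ≥0) {p r : ℝ} (hp : 0 < p)
    (hpr : p ≤ r) :
    (∑ a ∈ s, (∑ b ∈ t, f a b ^ p) ^ (r / p)) ^ (1 / r) ≤
      (∑ b ∈ t, (∑ a ∈ s, f a b ^ r) ^ (p / r)) ^ (1 / p) := by
  have := hp.trans_le hpr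
  calc _ = ((∑ a ∈ s, (∑ b ∈ t, f a b ^ p) ^ (r / p)) ^ (1 / (r / p))) ^ (1 / p) := by
        rw [← NNReal.rpow_mul, one_div_div, ← mul_div_assoc, mul_one, div_div_cancel_left' hp.ne',
          one_div]
    _ ≤ (∑ b ∈ t, (∑ a ∈ s, (f a b ^ p) ^ (r / p)) ^ (1 / (r / p))) ^ (1 / p) := by
        gcongr
        exact Lp_sum_le _ _ _ ((one_le_div hp).mpr hpr)
    _ = _ := by simp only [← NNReal.rpow_mul, mul_div_cancel₀ r hp.ne', one_div_div]

theorem rpow_sum_of_subsingleton_support [Fintype α] {f : α → ℝ≥0} (hf : (support f).Subsingleton)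
    {p : ℝ} (hp : p ≠ 0) : (∑ a, f a) ^ p = ∑ a, f a ^ p := by
  obtain hzero | ⟨a, ha⟩ := hf.eq_empty_or_singleton
  · simp [support_eq_empty_iff.mp hzero, hp]
  · have h0 : ∀ b, b ≠ a → f b = 0 := fun b hb => by
      simpa [ha, hb] using (notMem_support (f := f) (x := b))
    rw [Fintype.sum_eq_single a h0, Fintype.sum_eq_single a fun b hb => by simp [h0 b hb, hp]]

theorem Lp_Lp_eq_Lp_Lr_of_subsingleton_support [Fintype α] (t : Finset β) {f : α → β → ℝ≥0}
    (hf : ∀ b, (support fun a => f a b).Subsingleton) {p r : ℝ} (hp : p ≠ 0) (hr : r ≠ 0) :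
    (∑ a, ∑ b ∈ t, f a b ^ p) ^ (1 / p) = (∑ b ∈ t, (∑ a, f a b ^ r) ^ (p / r)) ^ (1 / p) := by
  have hf' : ∀ b, (support fun a => f a b ^ r).Subsingleton := fun b => by
    simpa only [Function.support, ne_eq, NNReal.rpow_eq_zero hr] using hf b
  simp only [rpow_sum_of_subsingleton_support (hf' _) (div_ne_zero hp hr), ← NNReal.rpow_mul,
    mul_div_cancel₀ p hr]
  rw [sum_comm]

end FiniteInequalities

section MixedNorm

variable {ι : Type*} [Fintype ι]

/-- The mixed `ℓ_{e 0}(ℓ_{e 1}(⋯))` norm of a function of `m` variables, the variable `0` being the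
outermost one. -/
noncomputable def mixedNorm : {m : ℕ} → (Fin m → ℝ) → ((Fin m → ι) → ℝ≥0) → ℝ≥0
  | 0, _, F => F default
  | _ + 1, e, F => (∑ x, mixedNorm (Fin.tail e) (fun i => F (Fin.cons x i)) ^ e 0) ^ (1 / e 0)

theorem sum_fin_succ_fun {M : Type*} [AddCommMonoid M] {m : ℕ} (F : (Fin (m + 1) → ι) → M) :
    ∑ i, F i = ∑ x, ∑ i, F (Fin.cons x i) := by
  rw [← (Fin.consEquiv fun _ => ι).sum_comp, Fintype.sum_prod_type]
  rfl

theorem mixedNorm_const {q : ℝ} (hq : q ≠ 0) {m : ℕ} (F : (Fin m → ι) → ℝ≥0) :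
    mixedNorm (fun _ => q) F = (∑ i, F i ^ q) ^ (1 / q) := by
  induction m with
  | zero => simp [mixedNorm, ← NNReal.rpow_mul, hq]
  | succ m ih =>
    have htail : Fin.tail (fun _ : Fin (m + 1) => q) = fun _ => q := rfl
    simp only [mixedNorm, htail, ih, ← NNReal.rpow_mul, one_div_mul_cancel hq, NNReal.rpow_one,
      sum_fin_succ_fun fun i => F i ^ q]

theorem mixedNorm_le_prod_rpow {τ : Type*} [Fintype τ] {m : ℕ} {e : Fin m → ℝ} {E : τ → Fin m → ℝ}
    {θ : τ → ℝ} (he : ∀ c, 0 < e c) (hE : ∀ t c, 0 < E t c) (hθ : ∀ t, 0 ≤ θ t)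
    (hθ_sum : ∑ t, θ t = 1) (h : ∀ c, 1 / e c = ∑ t, θ t / E t c) (F : (Fin m → ι) → ℝ≥0) :
    mixedNorm e F ≤ ∏ t, mixedNorm (E t) F ^ θ t := by
  induction m with
  | zero =>
    refine le_of_eq (NNReal.eq ?_)
    push_cast [mixedNorm]
    rw [← Real.rpow_sum_of_nonneg (NNReal.coe_nonneg _) fun t _ => hθ t, hθ_sum, Real.rpow_one]
  | succ m ih =>
    have ih' := fun x => ih (fun c => he c.succ) (fun t c => hE t c.succ) (fun c => h c.succ)
      fun i => F (Fin.cons x i)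
    calc mixedNorm e F
      _ ≤ (∑ x, (∏ t, mixedNorm (Fin.tail (E t)) (fun i => F (Fin.cons x i)) ^ θ t) ^ e 0) ^
            (1 / e 0) := by
          have := (he 0).le
          rw [mixedNorm]
          gcongr with x
          exact ih' x
      _ ≤ ∏ t, mixedNorm (E t) F ^ θ t :=
          Lq_prod_rpow_le_prod_Lp_rpow univ univ
            (fun t x => mixedNorm (Fin.tail (E t)) fun i => F (Fin.cons x i)) (he 0)
            (fun t _ => hE t 0) (fun t _ => hθ t) (h 0)

/-- At a position outside `S`, Minkowski's inequality exchanges the sum over that coordinate with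
the inner `ℓ_p` sum; at a position in `S` the value of `π` determines the coordinate, so the fibers
of `π` for different values of the coordinate are disjoint. -/
theorem mixedNorm_ite_le {U : Type*} [Fintype U] [DecidableEq U] {p r : ℝ} (hp : 0 < p)
    (hpr : p ≤ r) {m : ℕ} (S : Fin m → Prop) [DecidablePred S] (π : (Fin m → ι) → U)
    (hπ : ∀ c, S c → ∀ i j, π i = π j → i c = j c) (F : (Fin m → ι) → ℝ≥0) :
    mixedNorm (fun c => if S c then p else r) F ≤
      (∑ u, (∑ i with π i = u, F i ^ r) ^ (p / r)) ^ (1 / p) := by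
  have hr : 0 < r := hp.trans_le hpr
  induction m with
  | zero =>
    calc F default = ((∑ i with π i = π default, F i ^ r) ^ (p / r)) ^ (1 / p) := by
          rw [univ_unique, filter_singleton, if_pos (by rfl), sum_singleton, ← NNReal.rpow_mul,
            ← NNReal.rpow_mul, show r * (p / r * (1 / p)) = 1 by field_simp, NNReal.rpow_one]
      _ ≤ _ := by
          gcongr
          exact single_le_sum (f := fun u => (∑ i with π i = u, F i ^ r) ^ (p / r))
            (fun _ _ => zero_le) (mem_univ _)
  | succ m ih =>
    set H : ι → U → ℝ≥0 := fun x u =>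
      (∑ i with π (Fin.cons x i) = u, F (Fin.cons x i) ^ r) ^ (1 / r)
    have hHr : ∀ x u, H x u ^ r = ∑ i with π (Fin.cons x i) = u, F (Fin.cons x i) ^ r :=
      fun x u => by rw [← NNReal.rpow_mul, one_div_mul_cancel hr.ne', NNReal.rpow_one]
    have hsum : ∀ u, ∑ i with π i = u, F i ^ r = ∑ x, H x u ^ r := fun u => by
      simp only [hHr, sum_filter, sum_fin_succ_fun]
    have ih' : ∀ x, mixedNorm (Fin.tail fun c => if S c then p else r) (fun i => F (Fin.cons x i)) ≤
        (∑ u, H x u ^ p) ^ (1 / p) := fun x => by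
      simp only [H, ← NNReal.rpow_mul, one_div_mul_eq_div]
      exact ih (fun c => S c.succ) (fun i => π (Fin.cons x i))
        (fun c hc i j hij => by simpa using hπ c.succ hc _ _ hij) fun i => F (Fin.cons x i)
    rw [mixedNorm]
    simp only [hsum]
    split_ifs with hS
    · have hdisjoint : ∀ u, (support fun x => H x u).Subsingleton := fun u x hx y hy => by
        rw [mem_support, ne_eq, ← NNReal.rpow_eq_zero hr.ne', hHr] at hx hy
        obtain ⟨i, hi, -⟩ := exists_ne_zero_of_sum_ne_zero hx
        obtain ⟨j, hj, -⟩ := exists_ne_zero_of_sum_ne_zero hy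
        simpa using hπ 0 hS _ _ ((mem_filter.mp hi).2.trans (mem_filter.mp hj).2.symm)
      rw [← Lp_Lp_eq_Lp_Lr_of_subsingleton_support univ hdisjoint hp.ne' hr.ne']
      gcongr with x
      exact (NNReal.le_rpow_inv_iff hp).mp (one_div p ▸ ih' x)
    · refine le_trans ?_ (Lr_Lp_le_Lp_Lr univ univ H hp hpr)
      simp only [← one_div_mul_eq_div p r, NNReal.rpow_mul]
      gcongr with x
      exact ih' x

end MixedNorm

section Blei

/-- The Bohnenblust–Hille exponent `2m / (m + 1)`. -/
noncomputable def bhExponent (m : ℕ) : ℝ := 2 * m / (m + 1)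

theorem bhExponent_pos {m : ℕ} (hm : m ≠ 0) : 0 < bhExponent m := by
  unfold bhExponent
  positivity

theorem bhExponent_lt_two (m : ℕ) : bhExponent m < 2 := by
  rw [bhExponent, div_lt_iff₀ (by positivity)]
  linarith

variable {k m : ℕ}

/-- The `k` cyclically consecutive positions in `Fin m` that start at `t`. -/
def window (hkm : k ≤ m) (t : Fin m) (j : Fin k) : Fin m := t + Fin.castLE hkm j

theorem window_injective (hkm : k ≤ m) (t : Fin m) : Injective (window hkm t) :=
  (add_right_injective t).comp (Fin.castLE_injective hkm)

variable [NeZero m]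

theorem card_filter_mem_range_window (hkm : k ≤ m) (c : Fin m)
    [DecidablePred fun t => c ∈ Set.range (window hkm t)] :
    #{t | c ∈ Set.range (window hkm t)} = k := by
  have himage : ({t | c ∈ Set.range (window hkm t)} : Finset (Fin m)) =
      univ.image fun j : Fin k => c - Fin.castLE hkm j := by
    ext t
    simp [window, eq_sub_iff_add_eq, eq_comm]
  have hinj : Injective fun j : Fin k => c - Fin.castLE hkm j :=
    sub_right_injective.comp (Fin.castLE_injective hkm)
  rw [himage, card_image_of_injective _ hinj, card_fin]

open scoped Classical in
theorem one_div_bhExponent_eq_sum_window (hk : k ≠ 0) (hkm : k ≤ m) (c : Fin m) :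
    1 / bhExponent m =
      ∑ t, (m : ℝ)⁻¹ / if c ∈ Set.range (window hkm t) then bhExponent k else 2 := by
  have hm : (m : ℝ) ≠ 0 := mod_cast NeZero.ne m
  have hcard := card_filter_mem_range_window hkm c
  have hcompl : #{t | c ∉ Set.range (window hkm t)} = (m : ℝ) - k := by
    have hsplit := card_filter_add_card_filter_not (s := univ)
      fun t => c ∈ Set.range (window hkm t)
    rw [hcard, card_fin] at hsplit
    exact eq_sub_of_add_eq' (mod_cast hsplit)
  simp only [apply_ite ((m : ℝ)⁻¹ / ·), sum_ite, sum_const, nsmul_eq_mul, hcard, hcompl, bhExponent]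
  field_simp
  ring

theorem sum_rpow_bhExponent_le_prod_window {ι : Type*} [Fintype ι] [DecidableEq ι] (hk : k ≠ 0)
    (hkm : k ≤ m) (F : (Fin m → ι) → ℝ≥0) :
    ∑ i, F i ^ bhExponent m ≤ ∏ t : Fin m, (∑ u : Fin k → ι,
      (∑ i with i ∘ window hkm t = u, F i ^ 2) ^ (bhExponent k / 2)) ^
        (bhExponent m / (bhExponent k * m)) := by
  classical
  have hm : (m : ℝ) ≠ 0 := mod_cast NeZero.ne m
  have hp := bhExponent_pos hk
  have hq := bhExponent_pos (NeZero.ne m)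
  let e : Fin m → Fin m → ℝ :=
    fun t c => if c ∈ Set.range (window hkm t) then bhExponent k else 2
  have hwindow : ∀ t, mixedNorm (e t) F ≤ (∑ u : Fin k → ι,
      (∑ i with i ∘ window hkm t = u, F i ^ 2) ^ (bhExponent k / 2)) ^ (1 / bhExponent k) := by
    intro t
    have := mixedNorm_ite_le hp (bhExponent_lt_two k).le (· ∈ Set.range (window hkm t))
      (fun i : Fin m → ι => i ∘ window hkm t) (by rintro _ ⟨j, rfl⟩ i i' h; exact congrFun h j) F
    simpa only [NNReal.rpow_two] using this
  calc ∑ i, F i ^ bhExponent m = mixedNorm (fun _ => bhExponent m) F ^ bhExponent m := by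
        rw [mixedNorm_const hq.ne', ← NNReal.rpow_mul, one_div_mul_cancel hq.ne', NNReal.rpow_one]
    _ ≤ (∏ t, mixedNorm (e t) F ^ (m : ℝ)⁻¹) ^ bhExponent m := by
        gcongr
        refine mixedNorm_le_prod_rpow (fun _ => hq) (fun t c => ?_) (fun _ => by positivity)
          (by simp [hm]) (one_div_bhExponent_eq_sum_window hk hkm) F
        split_ifs <;> positivity
    _ ≤ (∏ t : Fin m, ((∑ u : Fin k → ι, (∑ i with i ∘ window hkm t = u, F i ^ 2) ^
          (bhExponent k / 2)) ^ (1 / bhExponent k)) ^ (m : ℝ)⁻¹) ^ bhExponent m := by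
        gcongr with t
        exact hwindow t
    _ = _ := by
        simp only [← NNReal.finsetProd_rpow, ← NNReal.rpow_mul]
        refine prod_congr rfl fun t _ => congrArg _ ?_
        field_simp

end Blei

section MomentComparison

variable {G : Type*} [Fintype G]

theorem expect_sq_le_rpow_mul_rpow (f : G → ℝ≥0) {p : ℝ} (hp : 0 < p) (hp2 : p ≤ 2) :
    𝔼 g, f g ^ 2 ≤ (𝔼 g, f g ^ p) ^ (2 / (4 - p)) * (𝔼 g, f g ^ 4) ^ ((2 - p) / (4 - p)) := by
  have h4p : 0 < 4 - p := by linarith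
  have hsum : 2 / (4 - p) + (2 - p) / (4 - p) = 1 := by field_simp; ring
  have hθ : 0 ≤ (2 - p) / (4 - p) := div_nonneg (by linarith) h4p.le
  have hpow : ∀ x y : ℝ≥0, (x ^ p / y) ^ (2 / (4 - p)) * (x ^ 4 / y) ^ ((2 - p) / (4 - p)) =
      x ^ 2 / y := fun x y => by
    have hexp : p * (2 / (4 - p)) + (4 : ℕ) * ((2 - p) / (4 - p)) = (2 : ℕ) := by
      push_cast; field_simp; ring
    rw [NNReal.div_rpow, NNReal.div_rpow, div_mul_div_comm, ← NNReal.rpow_natCast x 4,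
      ← NNReal.rpow_mul, ← NNReal.rpow_mul, ← NNReal.rpow_add_of_nonneg _ (by positivity)
      (by positivity), ← NNReal.rpow_add_of_nonneg _ (by positivity) hθ, hexp, hsum,
      NNReal.rpow_natCast, NNReal.rpow_one]
  have holder := sum_prod_rpow_le_prod_sum_rpow (univ : Finset G) (univ : Finset Bool)
    (fun b g => (if b then f g ^ p else f g ^ 4) / Fintype.card G)
    (w := fun b => if b then 2 / (4 - p) else (2 - p) / (4 - p))
    (by rintro (_ | _) - <;> simp [hθ, h4p.le, div_nonneg]) (by simp [hsum])
  simpa [hpow, ← sum_div, Fintype.expect_eq_sum_div_card] using holder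

theorem rpow_expect_sq_le {f : G → ℝ≥0} {C : ℝ≥0} (hf : 𝔼 g, f g ^ 4 ≤ C * (𝔼 g, f g ^ 2) ^ 2)
    {p : ℝ} (hp : 0 < p) (hp2 : p ≤ 2) :
    (𝔼 g, f g ^ 2) ^ (p / 2) ≤ C ^ ((2 - p) / 2) * 𝔼 g, f g ^ p := by
  have h4p : 0 < 4 - p := by linarith
  have : 0 ≤ 2 - p := by linarith
  set V := 𝔼 g, f g ^ 2
  set A := 𝔼 g, f g ^ p
  obtain hV | hV := eq_or_ne V 0
  · simp [hV, hp.ne']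
  have hself : V ≤ A ^ (2 / (4 - p)) * C ^ ((2 - p) / (4 - p)) * V ^ (2 * ((2 - p) / (4 - p))) := by
    refine (expect_sq_le_rpow_mul_rpow f hp hp2).trans ?_
    rw [mul_assoc, NNReal.rpow_mul, ← NNReal.mul_rpow, NNReal.rpow_two]
    gcongr
  have hcancel : V ^ (p / (4 - p)) ≤ A ^ (2 / (4 - p)) * C ^ ((2 - p) / (4 - p)) := by
    refine le_of_mul_le_mul_right ?_ (NNReal.rpow_pos (p := 2 * ((2 - p) / (4 - p)))
      (pos_iff_ne_zero.mpr hV))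
    rwa [← NNReal.rpow_add hV, show p / (4 - p) + 2 * ((2 - p) / (4 - p)) = 1 by field_simp; ring,
      NNReal.rpow_one]
  calc V ^ (p / 2) = (V ^ (p / (4 - p))) ^ ((4 - p) / 2) := by
        rw [← NNReal.rpow_mul, div_mul_div_cancel₀ h4p.ne']
    _ ≤ (A ^ (2 / (4 - p)) * C ^ ((2 - p) / (4 - p))) ^ ((4 - p) / 2) := by gcongr
    _ = C ^ ((2 - p) / 2) * A := by
        rw [NNReal.mul_rpow, ← NNReal.rpow_mul, ← NNReal.rpow_mul, div_mul_div_cancel₀ h4p.ne',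
          div_mul_div_cancel₀ h4p.ne', div_self two_ne_zero, NNReal.rpow_one, mul_comm]

end MomentComparison

section CoefficientConvolution

variable {ι : Type*}

theorem card_antidiagonal_le_two_pow_degree [DecidableEq ι] (γ : ι →₀ ℕ) :
    #(antidiagonal γ) ≤ 2 ^ γ.degree := by
  calc #(antidiagonal γ) ≤ #(Iic γ) := by
        refine card_le_card_of_injOn Prod.fst (fun x hx => ?_) fun x hx y hy hxy => ?_
        · exact mem_coe.mpr (mem_Iic.mpr (antidiagonal.fst_le hx))
        · have hsum := (mem_antidiagonal.mp hx).trans (mem_antidiagonal.mp hy).symm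
          exact Prod.ext hxy (add_left_cancel (hxy ▸ hsum))
    _ = ∏ i ∈ γ.support, (γ i + 1) := by simp only [Finsupp.card_Iic, Nat.card_Iic]
    _ ≤ ∏ i ∈ γ.support, 2 ^ γ i := prod_le_prod' fun i _ => Nat.lt_two_pow_self
    _ = 2 ^ γ.degree := by rw [prod_pow_eq_pow_sum, Finsupp.degree_apply]

theorem sum_sum_antidiagonal_mul_le [DecidableEq ι] (s t u : Finset (ι →₀ ℕ))
    {f g : (ι →₀ ℕ) → ℝ≥0} (hf : ∀ α ∉ s, f α = 0) (hg : ∀ β ∉ t, g β = 0) :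
    ∑ γ ∈ u, ∑ x ∈ antidiagonal γ, f x.1 * g x.2 ≤ (∑ α ∈ s, f α) * ∑ β ∈ t, g β := by
  have hfilter : ∀ γ, ∑ x ∈ antidiagonal γ, f x.1 * g x.2 =
      ∑ x ∈ s ×ˢ t with x.1 + x.2 = γ, f x.1 * g x.2 := fun γ => by
    refine (sum_subset (fun x hx => mem_antidiagonal.mpr (mem_filter.mp hx).2)
      fun x hx hx' => ?_).symm
    have hnot : x.1 ∈ s → x.2 ∉ t := by simpa [mem_antidiagonal.mp hx] using hx'
    by_cases hs : x.1 ∈ s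
    · rw [hg _ (hnot hs), mul_zero]
    · rw [hf _ hs, zero_mul]
  simp only [hfilter, sum_mul_sum, ← sum_product']
  exact sum_fiberwise_le_sum_of_sum_fiber_nonneg fun _ _ => zero_le

theorem sum_nnnorm_coeff_mul_sq_le {A : Type*} [NormedCommRing A] {R S : MvPolynomial ι A} {d : ℕ}
    (hd : (R * S).totalDegree ≤ d) :
    ∑ γ ∈ (R * S).support, ‖coeff γ (R * S)‖₊ ^ 2 ≤
      2 ^ d * ((∑ α ∈ R.support, ‖coeff α R‖₊ ^ 2) * ∑ β ∈ S.support, ‖coeff β S‖₊ ^ 2) := by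
  classical
  calc ∑ γ ∈ (R * S).support, ‖coeff γ (R * S)‖₊ ^ 2
    _ ≤ ∑ γ ∈ (R * S).support,
          2 ^ d * ∑ x ∈ antidiagonal γ, ‖coeff x.1 R‖₊ ^ 2 * ‖coeff x.2 S‖₊ ^ 2 := by
        refine sum_le_sum fun γ hγ => ?_
        calc ‖coeff γ (R * S)‖₊ ^ 2
          _ ≤ (∑ x ∈ antidiagonal γ, ‖coeff x.1 R‖₊ * ‖coeff x.2 S‖₊) ^ 2 := by
              rw [coeff_mul]
              gcongr
              exact nnnorm_sum_le_of_le _ fun x _ => nnnorm_mul_le _ _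
          _ ≤ #(antidiagonal γ) * ∑ x ∈ antidiagonal γ, (‖coeff x.1 R‖₊ * ‖coeff x.2 S‖₊) ^ 2 :=
              sq_sum_le_card_mul_sum_sq
          _ ≤ 2 ^ d * ∑ x ∈ antidiagonal γ, ‖coeff x.1 R‖₊ ^ 2 * ‖coeff x.2 S‖₊ ^ 2 := by
              simp only [mul_pow]
              gcongr
              exact_mod_cast (card_antidiagonal_le_two_pow_degree γ).trans
                (Nat.pow_le_pow_right two_pos ((le_totalDegree hγ).trans hd))
    _ ≤ _ := by
        rw [← mul_sum]
        gcongr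
        exact sum_sum_antidiagonal_mul_le R.support S.support _ (f := fun α => ‖coeff α R‖₊ ^ 2)
          (g := fun β => ‖coeff β S‖₊ ^ 2) (by simp) (by simp)

end CoefficientConvolution

section TorusGrid

variable {ι : Type*}

theorem apply_le_totalDegree {A : Type*} [CommSemiring A] {R : MvPolynomial ι A} {α : ι →₀ ℕ}
    (hα : α ∈ R.support) (x : ι) : α x ≤ R.totalDegree :=
  (Finsupp.le_degree x α).trans (le_totalDegree hα)

variable {N : ℕ} [NeZero N]

/-- The point of the torus `𝕋^ι` whose coordinates are the `N`-th roots of unity indexed by `g`;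
averaging over `g` replaces integration over the torus for polynomials of small degree. -/
noncomputable def torusPoint (g : ι → ZMod N) (x : ι) : ℂ := ZMod.stdAddChar (g x)

theorem norm_torusPoint (g : ι → ZMod N) (x : ι) : ‖torusPoint g x‖ = 1 :=
  AddChar.norm_apply _ _

theorem sum_stdAddChar_pow_mul_conj {a b : ℕ} (ha : a < N) (hb : b < N) :
    ∑ j : ZMod N, ZMod.stdAddChar j ^ a * conj (ZMod.stdAddChar j ^ b) =
      if a = b then (N : ℂ) else 0 := by
  have hchar : ∀ j : ZMod N, ZMod.stdAddChar j ^ a * conj (ZMod.stdAddChar j ^ b) =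
      ZMod.stdAddChar (j * (a - b : ZMod N)) := fun j => by
    rw [← AddChar.map_nsmul_eq_pow, ← AddChar.map_nsmul_eq_pow, ← AddChar.map_neg_eq_conj,
      ← AddChar.map_add_eq_mul, nsmul_eq_mul, nsmul_eq_mul]
    congr 1
    ring
  have hcast : (a - b : ZMod N) = 0 ↔ a = b := by
    rw [sub_eq_zero, ZMod.natCast_eq_natCast_iff', Nat.mod_eq_of_lt ha, Nat.mod_eq_of_lt hb]
  simp only [hchar, AddChar.sum_mulShift _ (ZMod.isPrimitive_stdAddChar N), hcast, ZMod.card]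
  split_ifs <;> simp

variable [Fintype ι] [DecidableEq ι]

theorem expect_monomial_mul_conj {α β : ι →₀ ℕ} (hα : ∀ x, α x < N) (hβ : ∀ x, β x < N) :
    𝔼 g : ι → ZMod N, (∏ x, torusPoint g x ^ α x) * conj (∏ x, torusPoint g x ^ β x) =
      if α = β then 1 else 0 := by
  have hN : (N : ℂ) ≠ 0 := NeZero.ne _
  simp only [map_prod, ← prod_mul_distrib, torusPoint, Fintype.expect_eq_sum_div_card]
  rw [← Fintype.prod_sum fun (x : ι) j => ZMod.stdAddChar j ^ α x * conj (ZMod.stdAddChar j ^ β x)]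
  simp only [sum_stdAddChar_pow_mul_conj (hα _) (hβ _)]
  split_ifs with h
  · simp [h, hN]
  · obtain ⟨x, hx⟩ := DFunLike.ne_iff.mp h
    rw [prod_eq_zero (mem_univ x) (if_neg hx), zero_div]

theorem expect_nnnorm_eval_torusPoint_sq {R : MvPolynomial ι ℂ}
    (hR : ∀ α ∈ R.support, ∀ x, α x < N) :
    𝔼 g : ι → ZMod N, ‖eval (torusPoint g) R‖₊ ^ 2 = ∑ α ∈ R.support, ‖coeff α R‖₊ ^ 2 := by
  have hnorm : ∀ z : ℂ, ((‖z‖ : ℝ) : ℂ) ^ 2 = z * conj z := fun z => (Complex.mul_conj' z).symm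
  apply NNReal.eq
  apply Complex.ofReal_injective
  push_cast
  simp only [hnorm]
  calc 𝔼 g : ι → ZMod N, eval (torusPoint g) R * conj (eval (torusPoint g) R)
    _ = ∑ α ∈ R.support, ∑ β ∈ R.support, coeff α R * conj (coeff β R) *
          𝔼 g : ι → ZMod N, (∏ x, torusPoint g x ^ α x) * conj (∏ x, torusPoint g x ^ β x) := by
        simp only [mul_expect, ← expect_sum_comm]
        refine expect_congr rfl fun g _ => ?_
        simp only [eval_eq', map_sum, sum_mul_sum, map_mul]
        exact sum_congr rfl fun α _ => sum_congr rfl fun β _ => by ring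
    _ = ∑ α ∈ R.support, coeff α R * conj (coeff α R) :=
        sum_congr rfl fun α hα => by
          rw [sum_eq_single_of_mem α hα fun β hβ hne => by
            rw [expect_monomial_mul_conj (hR α hα) (hR β hβ), if_neg hne.symm, mul_zero],
            expect_monomial_mul_conj (hR α hα) (hR α hα), if_pos rfl, mul_one]

/-- Khinchine's inequality on the torus: the `L⁴` norm of `R` is controlled by the `L²` norm of
`R * R`, and Hölder's inequality interpolates `L²` between `L^p` and `L⁴`. -/
theorem rpow_sum_nnnorm_coeff_sq_le {R : MvPolynomial ι ℂ} {d : ℕ} (hR : R.totalDegree ≤ d)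
    (hN : 2 * d < N) {p : ℝ} (hp : 0 < p) (hp2 : p ≤ 2) :
    (∑ α ∈ R.support, ‖coeff α R‖₊ ^ 2) ^ (p / 2) ≤
      (4 ^ d) ^ ((2 - p) / 2) * 𝔼 g : ι → ZMod N, ‖eval (torusPoint g) R‖₊ ^ p := by
  have hRR : (R * R).totalDegree ≤ 2 * d := (totalDegree_mul R R).trans (by omega)
  have hsq := expect_nnnorm_eval_torusPoint_sq (N := N) (R := R) fun α hα x => by
    have := apply_le_totalDegree hα x
    omega
  rw [← hsq]
  refine rpow_expect_sq_le ?_ hp hp2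
  calc 𝔼 g : ι → ZMod N, ‖eval (torusPoint g) R‖₊ ^ 4
    _ = 𝔼 g : ι → ZMod N, ‖eval (torusPoint g) (R * R)‖₊ ^ 2 := by
        refine expect_congr rfl fun g _ => ?_
        rw [map_mul, nnnorm_mul]
        ring
    _ = ∑ γ ∈ (R * R).support, ‖coeff γ (R * R)‖₊ ^ 2 :=
        expect_nnnorm_eval_torusPoint_sq fun γ hγ x => by
          have := apply_le_totalDegree hγ x
          omega
    _ ≤ 2 ^ (2 * d) * ((∑ α ∈ R.support, ‖coeff α R‖₊ ^ 2) *
          ∑ α ∈ R.support, ‖coeff α R‖₊ ^ 2) := sum_nnnorm_coeff_mul_sq_le hRR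
    _ = 4 ^ d * (𝔼 g : ι → ZMod N, ‖eval (torusPoint g) R‖₊ ^ 2) ^ 2 := by
        rw [hsq, pow_mul, sq (∑ α ∈ R.support, _)]
        norm_num

end TorusGrid

section DirectionalDerivative

variable {ι : Type*}

theorem eval_smul_of_isHomogeneous {A : Type*} [CommSemiring A]
    {R : MvPolynomial ι A} {d : ℕ} (hR : R.IsHomogeneous d) (c : A) (z : ι → A) :
    eval (c • z) R = c ^ d * eval z R := by
  rw [eval_eq, eval_eq, mul_sum]
  refine sum_congr rfl fun α hα => ?_
  have hdeg : α.degree = d := of_not_not (mt hR.coeff_eq_zero (mem_support_iff.mp hα))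
  simp only [Pi.smul_apply, smul_eq_mul, mul_pow, prod_mul_distrib, prod_pow_eq_pow_sum,
    ← Finsupp.degree_apply, hdeg]
  ring

/-- The derivative of a polynomial in the constant direction `w`. -/
noncomputable def dirDeriv {A : Type*} [CommSemiring A] (w : ι → A) :
    Derivation A (MvPolynomial ι A) (MvPolynomial ι A) :=
  mkDerivation A fun x => C (w x)

theorem dirDeriv_eq_sum_pderiv {A : Type*} [CommSemiring A] [Fintype ι] (w : ι → A)
    (R : MvPolynomial ι A) : dirDeriv w R = ∑ x, w x • pderiv x R := by
  classical
  have h : dirDeriv w = ∑ x, w x • (pderiv x : Derivation A (MvPolynomial ι A) _) := by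
    refine derivation_ext fun y => ?_
    rw [dirDeriv, mkDerivation_X, ← Derivation.coeFnAddMonoidHom_apply, map_sum, Finset.sum_apply]
    simp [pderiv_X, Pi.single_apply, smul_eq_C_mul]
  rw [h, ← Derivation.coeFnAddMonoidHom_apply, map_sum, Finset.sum_apply]
  rfl

theorem isHomogeneous_dirDeriv {A : Type*} [CommSemiring A] [Finite ι] {R : MvPolynomial ι A}
    {d : ℕ} (hR : R.IsHomogeneous d) (w : ι → A) : (dirDeriv w R).IsHomogeneous (d - 1) := by
  have := Fintype.ofFinite ι
  rw [dirDeriv_eq_sum_pderiv]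
  refine IsHomogeneous.sum _ _ _ fun x _ => ?_
  rw [smul_eq_C_mul]
  exact hR.pderiv.C_mul _

theorem hasDerivAt_eval_add_smul {𝕜 : Type*} [NontriviallyNormedField 𝕜] (R : MvPolynomial ι 𝕜)
    (z w : ι → 𝕜) (s : 𝕜) :
    HasDerivAt (fun s => eval (z + s • w) R) (eval (z + s • w) (dirDeriv w R)) s := by
  induction R using MvPolynomial.induction_on with
  | C a => simpa [dirDeriv] using hasDerivAt_const s a
  | add p q hp hq =>
    simp only [map_add]
    exact hp.add hq
  | mul_X p x hp =>
    have hX : HasDerivAt (fun s => eval (z + s • w) (X x)) (w x) s := by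
      simpa using ((hasDerivAt_id s).mul_const (w x)).const_add (z x)
    simp only [map_mul, Derivation.leibniz, smul_eq_mul, map_add, dirDeriv, mkDerivation_X, eval_C]
    exact (hp.mul hX).congr_deriv (by simp only [dirDeriv]; ring)

variable [Fintype ι] {R : MvPolynomial ι ℂ} {d : ℕ} {M : ℝ}

theorem norm_eval_le_of_norm_le (hR : R.IsHomogeneous d)
    (hM : ∀ z : ι → ℂ, ‖z‖ ≤ 1 → ‖eval z R‖ ≤ M)
    {c : ℝ} (hc : 0 < c) {z : ι → ℂ} (hz : ‖z‖ ≤ c) : ‖eval z R‖ ≤ c ^ d * M := by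
  have hc' : (c : ℂ) ≠ 0 := mod_cast hc.ne'
  have hnorm : ‖(c : ℂ)‖ = c := by simp [hc.le]
  have hz' : ‖(c : ℂ)⁻¹ • z‖ ≤ 1 := by
    rw [norm_smul, norm_inv, hnorm, inv_mul_le_one₀ hc]
    exact hz
  calc ‖eval z R‖ = c ^ d * ‖eval ((c : ℂ)⁻¹ • z) R‖ := by
        rw [← smul_inv_smul₀ hc' z, eval_smul_of_isHomogeneous hR, norm_mul, norm_pow, hnorm,
          inv_smul_smul₀ hc']
    _ ≤ c ^ d * M := by
        gcongr
        exact hM _ hz'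

theorem norm_eval_dirDeriv_le (hR : R.IsHomogeneous d)
    (hM : ∀ z : ι → ℂ, ‖z‖ ≤ 1 → ‖eval z R‖ ≤ M) {w z : ι → ℂ} (hw : ‖w‖ ≤ 1) (hz : ‖z‖ ≤ 1) :
    ‖eval z (dirDeriv w R)‖ ≤ 3 * d * M := by
  rcases Nat.eq_zero_or_pos d with rfl | hd
  · obtain ⟨a, rfl⟩ : ∃ a, R = C a :=
      ⟨_, totalDegree_eq_zero_iff_eq_C.mp (Nat.le_zero.mp hR.totalDegree_le)⟩
    simp [dirDeriv]
  have hM0 : 0 ≤ M := (norm_nonneg _).trans (hM z hz)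
  have hderiv := (hasDerivAt_eval_add_smul R z w 0).deriv
  simp only [zero_smul, add_zero] at hderiv
  rw [← hderiv]
  have hdiff : Differentiable ℂ fun s : ℂ => eval (z + s • w) R := fun s =>
    (hasDerivAt_eval_add_smul R z w s).differentiableAt
  calc _ ≤ 3 * M / (d : ℝ)⁻¹ := by
        refine Complex.norm_deriv_le_of_forall_mem_sphere_norm_le (by positivity)
          hdiff.diffContOnCl fun s hs => ?_
        have hs : ‖s‖ = (d : ℝ)⁻¹ := by simpa using hs
        have hzs : ‖z + s • w‖ ≤ 1 + (d : ℝ)⁻¹ := by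
          refine (norm_add_le _ _).trans (add_le_add hz ?_)
          rw [norm_smul, hs]
          exact mul_le_of_le_one_right (by positivity) hw
        refine (norm_eval_le_of_norm_le hR hM (by positivity) hzs).trans ?_
        gcongr
        exact Real.one_add_inv_pow_le_exp.trans Real.exp_one_lt_three.le
    _ = 3 * d * M := by rw [div_inv_eq_mul]; ring

end DirectionalDerivative

section IteratedDerivatives

variable {ι : Type*}

/-- The multi-index of the monomial `∏ t, X (i t)`. -/
noncomputable def multiIndex {m : ℕ} (i : Fin m → ι) : ι →₀ ℕ := ∑ t, Finsupp.single (i t) 1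

theorem multiIndex_succ {m : ℕ} (i : Fin (m + 1) → ι) :
    multiIndex i = Finsupp.single (i 0) 1 + multiIndex (Fin.tail i) :=
  Fin.sum_univ_succ _

theorem exists_multiIndex_eq {m : ℕ} {α : ι →₀ ℕ} (hα : α.degree = m) :
    ∃ i : Fin m → ι, multiIndex i = α := by
  induction m generalizing α with
  | zero =>
    rw [Finsupp.degree_eq_zero_iff] at hα
    exact ⟨Fin.elim0, by simp [multiIndex, hα]⟩
  | succ m ih =>
    have hne : α ≠ 0 := by
      rintro rfl
      simp at hα
    obtain ⟨x, hx⟩ := Finsupp.ne_iff.mp hne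
    obtain ⟨β, rfl⟩ := exists_add_of_le
      (Finsupp.single_le_iff.mpr (Nat.one_le_iff_ne_zero.mpr hx) : Finsupp.single x 1 ≤ α)
    rw [map_add, Finsupp.degree_single] at hα
    obtain ⟨i, rfl⟩ := ih (by omega : β.degree = m)
    exact ⟨Fin.cons x i, by simp [multiIndex_succ]⟩

theorem multiIndex_comp_le {k m : ℕ} {e : Fin k → Fin m} (he : Injective e) (i : Fin m → ι) :
    multiIndex (i ∘ e) ≤ multiIndex i := by
  calc multiIndex (i ∘ e) = ∑ c ∈ univ.map ⟨e, he⟩, Finsupp.single (i c) 1 := by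
        simp [multiIndex]
    _ ≤ multiIndex i := sum_le_sum_of_subset (subset_univ _)

/-- The partial derivative `∂^k R / ∂X (u 0) ⋯ ∂X (u (k - 1))`. -/
noncomputable def iteratedPDeriv {A : Type*} [CommSemiring A] :
    {k : ℕ} → (Fin k → ι) → MvPolynomial ι A →ₗ[A] MvPolynomial ι A
  | 0, _ => LinearMap.id
  | _ + 1, u => (iteratedPDeriv (Fin.tail u)).comp (pderiv (u 0)).toLinearMap

theorem isHomogeneous_iteratedPDeriv {A : Type*} [CommSemiring A] {R : MvPolynomial ι A} {d : ℕ}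
    (hR : R.IsHomogeneous d) {k : ℕ} (u : Fin k → ι) :
    (iteratedPDeriv u R).IsHomogeneous (d - k) := by
  induction k generalizing R d with
  | zero => exact hR
  | succ k ih =>
    rw [← Nat.sub_sub, Nat.sub_right_comm]
    exact ih hR.pderiv _

theorem norm_coeff_le_norm_coeff_iteratedPDeriv {𝕜 : Type*} [RCLike 𝕜] (R : MvPolynomial ι 𝕜)
    {k : ℕ} (u : Fin k → ι) (β : ι →₀ ℕ) :
    ‖coeff (β + multiIndex u) R‖ ≤ ‖coeff β (iteratedPDeriv u R)‖ := by
  induction k generalizing R with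
  | zero => simp [iteratedPDeriv, multiIndex]
  | succ k ih =>
    refine le_trans ?_ (ih (pderiv (u 0) R) (Fin.tail u))
    rw [coeff_pderiv, norm_mul, multiIndex_succ, add_assoc, add_comm (multiIndex _)]
    refine le_mul_of_one_le_right (norm_nonneg _) ?_
    rw [← Nat.cast_succ, RCLike.norm_natCast]
    exact mod_cast Nat.succ_pos _

variable [Fintype ι]

theorem sum_prod_smul_iteratedPDeriv_succ {A : Type*} [CommSemiring A] {k : ℕ}
    (w : Fin (k + 1) → ι → A) (R : MvPolynomial ι A) :
    ∑ u : Fin (k + 1) → ι, (∏ t, w t (u t)) • iteratedPDeriv u R =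
      ∑ u : Fin k → ι, (∏ t, Fin.tail w t (u t)) • iteratedPDeriv u (dirDeriv (w 0) R) := by
  rw [sum_fin_succ_fun, sum_comm]
  refine sum_congr rfl fun u _ => ?_
  simp only [dirDeriv_eq_sum_pderiv, map_sum, map_smul, smul_sum, smul_smul, Fin.prod_univ_succ,
    Fin.cons_zero, Fin.cons_succ, iteratedPDeriv, LinearMap.comp_apply, Fin.tail_cons, Fin.tail,
    Derivation.coeFn_coe, mul_comm]

theorem norm_sum_prod_mul_eval_iteratedPDeriv_le {R : MvPolynomial ι ℂ} {d : ℕ} {M : ℝ}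
    (hR : R.IsHomogeneous d) (hM : ∀ z : ι → ℂ, ‖z‖ ≤ 1 → ‖eval z R‖ ≤ M) {k : ℕ}
    {w : Fin k → ι → ℂ} {z : ι → ℂ} (hw : ∀ t, ‖w t‖ ≤ 1) (hz : ‖z‖ ≤ 1) :
    ‖∑ u : Fin k → ι, (∏ t, w t (u t)) * eval z (iteratedPDeriv u R)‖ ≤ (3 * d) ^ k * M := by
  suffices h : ‖eval z (∑ u : Fin k → ι, (∏ t, w t (u t)) • iteratedPDeriv u R)‖ ≤
      (3 * d) ^ k * M by
    simpa only [map_sum, smul_eval] using h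
  induction k generalizing R d M with
  | zero => simpa [iteratedPDeriv] using hM z hz
  | succ k ih =>
    have hM0 : 0 ≤ M := (norm_nonneg _).trans (hM z hz)
    rw [sum_prod_smul_iteratedPDeriv_succ]
    calc _ ≤ (3 * (d - 1 : ℕ) : ℝ) ^ k * (3 * d * M) :=
          ih (isHomogeneous_dirDeriv hR (w 0))
            (fun z hz => norm_eval_dirDeriv_le hR hM (hw 0) hz) fun t => hw t.succ
      _ ≤ (3 * d) ^ k * (3 * d * M) := by
          gcongr
          exact Nat.sub_le d 1
      _ = (3 * d) ^ (k + 1) * M := by ring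

end IteratedDerivatives

section BohnenblustHilleBounds

/-- `B` bounds the Bohnenblust–Hille constant of complex `k`-linear forms, which are given by their
coefficients `c` and tested on vectors of sup norm at most one. -/
def IsMultilinearBHBound (k : ℕ) (B : ℝ≥0) : Prop :=
  ∀ (ι : Type) [Fintype ι] (c : (Fin k → ι) → ℂ) (M : ℝ≥0),
    (∀ w : Fin k → ι → ℂ, (∀ t, ‖w t‖ ≤ 1) → ‖∑ u, (∏ t, w t (u t)) * c u‖ ≤ M) →
    ∑ u, ‖c u‖₊ ^ bhExponent k ≤ (B * M) ^ bhExponent k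

/-- `K` bounds the Bohnenblust–Hille constant of complex `m`-homogeneous polynomials, whose sup norm
is taken over the closed unit polydisc. -/
def IsPolynomialBHBound (m : ℕ) (K : ℝ≥0) : Prop :=
  ∀ (ι : Type) [Fintype ι] (P : MvPolynomial ι ℂ) (M : ℝ≥0),
    P.IsHomogeneous m → (∀ z : ι → ℂ, ‖z‖ ≤ 1 → ‖eval z P‖ ≤ M) →
    ∑ α ∈ P.support, ‖coeff α P‖₊ ^ bhExponent m ≤ (K * M) ^ bhExponent m

variable {k m : ℕ} {B K M : ℝ≥0}

theorem sum_nnnorm_coeff_sq_le_iteratedPDeriv {ι 𝕜 : Type*} [RCLike 𝕜] (P : MvPolynomial ι 𝕜)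
    (u : Fin k → ι) (s : Finset (ι →₀ ℕ)) (hs : ∀ α ∈ s, multiIndex u ≤ α) :
    ∑ α ∈ s, ‖coeff α P‖₊ ^ 2 ≤
      ∑ β ∈ (iteratedPDeriv u P).support, ‖coeff β (iteratedPDeriv u P)‖₊ ^ 2 := by
  classical
  have hinj : Set.InjOn (· - multiIndex u) s := fun α hα β hβ h => by
    rw [← tsub_add_cancel_of_le (hs α hα), ← tsub_add_cancel_of_le (hs β hβ)]
    exact congrArg (· + multiIndex u) h
  calc ∑ α ∈ s, ‖coeff α P‖₊ ^ 2
    _ ≤ ∑ α ∈ s, ‖coeff (α - multiIndex u) (iteratedPDeriv u P)‖₊ ^ 2 := by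
        refine sum_le_sum fun α hα => ?_
        gcongr
        rw [← NNReal.coe_le_coe, coe_nnnorm, coe_nnnorm]
        simpa only [tsub_add_cancel_of_le (hs α hα)] using
          norm_coeff_le_norm_coeff_iteratedPDeriv P u (α - multiIndex u)
    _ = ∑ β ∈ s.image (· - multiIndex u), ‖coeff β (iteratedPDeriv u P)‖₊ ^ 2 :=
        (sum_image (f := fun β => ‖coeff β (iteratedPDeriv u P)‖₊ ^ 2) hinj).symm
    _ ≤ _ := sum_le_sum_of_ne_zero fun β _ hβ => by
        rw [mem_support_iff]
        rintro h
        simp [h] at hβ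

theorem sum_fiber_nnnorm_coeff_sq_le {ι 𝕜 : Type*} [DecidableEq ι] [RCLike 𝕜]
    (P : MvPolynomial ι 𝕜) {A : Finset (Fin m → ι)}
    (hA : Set.InjOn multiIndex (A : Set (Fin m → ι))) {e : Fin k → Fin m} (he : Injective e)
    (u : Fin k → ι) :
    ∑ i ∈ A with i ∘ e = u, ‖coeff (multiIndex i) P‖₊ ^ 2 ≤
      ∑ β ∈ (iteratedPDeriv u P).support, ‖coeff β (iteratedPDeriv u P)‖₊ ^ 2 := by
  classical
  have hinj : Set.InjOn multiIndex (A.filter (· ∘ e = u) : Set (Fin m → ι)) :=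
    hA.mono (coe_subset.mpr (filter_subset _ _))
  rw [← sum_image (f := fun α => ‖coeff α P‖₊ ^ 2) hinj]
  refine sum_nnnorm_coeff_sq_le_iteratedPDeriv P u _ fun α hα => ?_
  obtain ⟨i, hi, rfl⟩ := mem_image.mp hα
  rw [← (mem_filter.mp hi).2]
  exact multiIndex_comp_le he i

theorem exists_injOn_multiIndex_image_eq_support {ι A : Type*} [DecidableEq ι] [CommSemiring A]
    {P : MvPolynomial ι A} (hP : P.IsHomogeneous m) :
    ∃ T : Finset (Fin m → ι),
      Set.InjOn multiIndex (T : Set (Fin m → ι)) ∧ T.image multiIndex = P.support := by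
  have hsurj : Set.SurjOn (multiIndex : (Fin m → ι) → ι →₀ ℕ) Set.univ P.support := fun α hα => by
    obtain ⟨i, hi⟩ := exists_multiIndex_eq (m := m) (α := α)
      (of_not_not (mt hP.coeff_eq_zero (mem_support_iff.mp hα)))
    exact ⟨i, Set.mem_univ i, hi⟩
  obtain ⟨T, -, hT⟩ := exists_subset_injOn_image_eq_of_surjOn _ _ hsurj
  exact ⟨T, hT⟩

theorem four_pow_rpow_mul_rpow_bhExponent (hk : k ≠ 0) (m : ℕ) (x : ℝ≥0) :
    (4 ^ m) ^ ((2 - bhExponent k) / 2) * x ^ bhExponent k =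
      (2 ^ ((m : ℝ) / k) * x) ^ bhExponent k := by
  have hexp : 2 * m * ((2 - bhExponent k) / 2) = m / k * bhExponent k := by
    unfold bhExponent
    field_simp
    ring
  rw [NNReal.mul_rpow, ← NNReal.rpow_mul, ← hexp, show (4 : ℝ≥0) = 2 ^ 2 by norm_num, ← pow_mul,
    ← NNReal.rpow_natCast, ← NNReal.rpow_mul]
  push_cast
  rfl

theorem IsMultilinearBHBound.sum_rpow_iteratedPDeriv_le (hk : k ≠ 0) (hB : IsMultilinearBHBound k B)
    {ι : Type} [Fintype ι] {P : MvPolynomial ι ℂ} (hP : P.IsHomogeneous m)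
    (hM : ∀ z : ι → ℂ, ‖z‖ ≤ 1 → ‖eval z P‖ ≤ M) :
    ∑ u : Fin k → ι, (∑ β ∈ (iteratedPDeriv u P).support, ‖coeff β (iteratedPDeriv u P)‖₊ ^ 2) ^
        (bhExponent k / 2) ≤
      (2 ^ ((m : ℝ) / k) * (B * ((3 * m) ^ k * M))) ^ bhExponent k := by
  classical
  have hdeg : ∀ u : Fin k → ι, (iteratedPDeriv u P).totalDegree ≤ m := fun u =>
    (isHomogeneous_iteratedPDeriv hP u).totalDegree_le.trans (Nat.sub_le m k)
  have hgrid : ∀ g : ι → ZMod (2 * m + 1),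
      ∑ u : Fin k → ι, ‖eval (torusPoint g) (iteratedPDeriv u P)‖₊ ^ bhExponent k ≤
        (B * ((3 * m) ^ k * M)) ^ bhExponent k := fun g => by
    refine hB ι _ _ fun w hw => ?_
    have hg : ‖torusPoint g‖ ≤ 1 :=
      (pi_norm_le_iff_of_nonneg zero_le_one).mpr fun x => (norm_torusPoint g x).le
    push_cast
    exact norm_sum_prod_mul_eval_iteratedPDeriv_le hP hM hw hg
  calc _ ≤ ∑ u : Fin k → ι, (4 ^ m) ^ ((2 - bhExponent k) / 2) *
          𝔼 g : ι → ZMod (2 * m + 1),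
            ‖eval (torusPoint g) (iteratedPDeriv u P)‖₊ ^ bhExponent k :=
        sum_le_sum fun u _ => rpow_sum_nnnorm_coeff_sq_le (hdeg u) (Nat.lt_succ_self _)
          (bhExponent_pos hk) (bhExponent_lt_two k).le
    _ = (4 ^ m) ^ ((2 - bhExponent k) / 2) * 𝔼 g : ι → ZMod (2 * m + 1),
          ∑ u : Fin k → ι, ‖eval (torusPoint g) (iteratedPDeriv u P)‖₊ ^ bhExponent k := by
        rw [← mul_sum, expect_sum_comm]
    _ ≤ _ := by
        rw [← four_pow_rpow_mul_rpow_bhExponent hk]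
        gcongr
        exact expect_le univ_nonempty fun g _ => hgrid g

theorem IsMultilinearBHBound.isPolynomialBHBound (hk : k ≠ 0) (hkm : k ≤ m)
    (hB : IsMultilinearBHBound k B) :
    IsPolynomialBHBound m (2 ^ ((m : ℝ) / k) * B * (3 * m) ^ k) := by
  classical
  intro ι _ P M hP hM
  have : NeZero m := ⟨by omega⟩
  have hm : (m : ℝ) ≠ 0 := NeZero.ne _
  have : (k : ℝ) ≠ 0 := mod_cast hk
  have hp := bhExponent_pos hk
  have hq := bhExponent_pos (NeZero.ne m)
  obtain ⟨A, hA, himage⟩ := exists_injOn_multiIndex_image_eq_support hP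
  set F : (Fin m → ι) → ℝ≥0 := fun i => if i ∈ A then ‖coeff (multiIndex i) P‖₊ else 0 with hF
  have hwindow : ∀ t, ∑ u : Fin k → ι,
      (∑ i with i ∘ window hkm t = u, F i ^ 2) ^ (bhExponent k / 2) ≤
        (2 ^ ((m : ℝ) / k) * (B * ((3 * m) ^ k * M))) ^ bhExponent k := fun t => by
    refine (sum_le_sum fun u _ => ?_).trans (hB.sum_rpow_iteratedPDeriv_le hk hP hM)
    gcongr
    simpa [hF, ite_pow, filter_inter] using
      sum_fiber_nnnorm_coeff_sq_le P hA (window_injective hkm t) u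
  calc ∑ α ∈ P.support, ‖coeff α P‖₊ ^ bhExponent m
    _ = ∑ i, F i ^ bhExponent m := by
        rw [← himage, sum_image hA]
        simp [hF, ite_pow, hq.ne']
    _ ≤ ∏ t : Fin m, (∑ u : Fin k → ι, (∑ i with i ∘ window hkm t = u, F i ^ 2) ^
          (bhExponent k / 2)) ^ (bhExponent m / (bhExponent k * m)) :=
        sum_rpow_bhExponent_le_prod_window hk hkm F
    _ ≤ ∏ _t : Fin m, ((2 ^ ((m : ℝ) / k) * (B * ((3 * m) ^ k * M))) ^ bhExponent k) ^
          (bhExponent m / (bhExponent k * m)) := by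
        gcongr with t
        exact hwindow t
    _ = (2 ^ ((m : ℝ) / k) * B * (3 * m) ^ k * M) ^ bhExponent m := by
        have hexp : bhExponent k * (bhExponent m / (bhExponent k * m) * m) = bhExponent m := by
          field_simp
        rw [prod_const, card_fin, ← NNReal.rpow_natCast, ← NNReal.rpow_mul, ← NNReal.rpow_mul, hexp]
        ring_nf

theorem isMultilinearBHBound_one : IsMultilinearBHBound 1 1 := by
  intro ι _ c M hM
  have hexp : bhExponent 1 = 1 := by norm_num [bhExponent]
  simp only [hexp, NNReal.rpow_one, one_mul]
  let a : ι → ℂ := fun x => c (Fin.cons x default)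
  have hw : ‖fun x => conj (a x) / ‖a x‖‖ ≤ 1 :=
    (pi_norm_le_iff_of_nonneg zero_le_one).mpr fun x => by
      rw [norm_div, RCLike.norm_conj, Complex.norm_real, norm_norm]
      exact div_self_le_one _
  have hphase : ∀ b : ℂ, conj b / ‖b‖ * b = ‖b‖ := fun b => by
    rcases eq_or_ne b 0 with rfl | hb
    · simp
    · rw [div_mul_eq_mul_div, Complex.conj_mul', sq, mul_div_cancel_right₀]
      simpa using hb
  have h := hM (fun _ x => conj (a x) / ‖a x‖) fun _ => hw
  simp only [sum_fin_succ_fun, univ_unique, sum_singleton, prod_singleton, Fin.default_eq_zero,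
    Fin.cons_zero] at h ⊢
  change ‖∑ x, conj (a x) / ‖a x‖ * a x‖ ≤ M at h
  change ∑ x, ‖a x‖₊ ≤ M
  simp only [hphase] at h
  rw [← Complex.ofReal_sum, Complex.norm_of_nonneg (by positivity)] at h
  simpa [← NNReal.coe_le_coe] using h

theorem eval_monomial_multiIndex {ι A : Type*} [CommSemiring A] (z : ι → A) (i : Fin m → ι)
    (a : A) : eval z (monomial (multiIndex i) a) = (∏ t, z (i t)) * a := by
  simp [multiIndex, monomial_sum_index, eval_monomial, mul_comm]

theorem multiIndex_prodMk_injective {ι : Type*} :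
    Injective fun u : Fin k → ι => multiIndex fun t => (t, u t) := by
  classical
  have happly : ∀ (u : Fin k → ι) (t : Fin k) (x : ι),
      multiIndex (fun t => (t, u t)) (t, x) = if u t = x then 1 else 0 := fun u t x => by
    simp [multiIndex, Finsupp.finsetSum_apply, Finsupp.single_apply, ite_and]
  intro u v huv
  funext t
  by_contra hne
  have := DFunLike.congr_fun huv (t, v t)
  simp [happly, hne] at this

theorem IsPolynomialBHBound.isMultilinearBHBound (hk : k ≠ 0) (hK : IsPolynomialBHBound k K) :
    IsMultilinearBHBound k K := by
  classical
  intro ι _ c M hM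
  set α : (Fin k → ι) → (Fin k × ι →₀ ℕ) := fun u => multiIndex fun t => (t, u t) with hα
  have hα_inj : Injective α := multiIndex_prodMk_injective
  set P : MvPolynomial (Fin k × ι) ℂ := ∑ u, monomial (α u) (c u) with hP
  have hcoeff : ∀ u, coeff (α u) P = c u := fun u => by
    simp [hP, coeff_sum, coeff_monomial, hα_inj.eq_iff]
  have hhom : P.IsHomogeneous k := IsHomogeneous.sum _ _ _ fun u _ =>
    isHomogeneous_monomial _ (by simp [hα, multiIndex])
  have heval : ∀ z, eval z P = ∑ u, (∏ t, z (t, u t)) * c u := fun z => by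
    simp [hP, hα, eval_monomial_multiIndex]
  have hPM : ∀ z : Fin k × ι → ℂ, ‖z‖ ≤ 1 → ‖eval z P‖ ≤ M := fun z hz => by
    rw [heval]
    refine hM (fun t x => z (t, x)) fun t => ?_
    exact (pi_norm_le_iff_of_nonneg zero_le_one).mpr fun x => (norm_le_pi_norm z (t, x)).trans hz
  refine le_trans ?_ (hK _ P M hhom hPM)
  calc ∑ u, ‖c u‖₊ ^ bhExponent k = ∑ β ∈ univ.image α, ‖coeff β P‖₊ ^ bhExponent k := by
        simp [sum_image hα_inj.injOn, hcoeff]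
    _ ≤ _ := sum_le_sum_of_ne_zero fun β _ hβ => by
        rw [mem_support_iff]
        rintro h
        simp [h, (bhExponent_pos hk).ne'] at hβ

theorem isPolynomialBHBound_two_pow (hm : m ≠ 0) : IsPolynomialBHBound m (2 ^ m * (3 * m)) := by
  simpa using
    isMultilinearBHBound_one.isPolynomialBHBound one_ne_zero (Nat.one_le_iff_ne_zero.mpr hm)

end BohnenblustHilleBounds

section Complexification

variable {ι : Type*}

theorem eval_ofReal_map_ofRealHom (P : MvPolynomial ι ℝ) (x : ι → ℝ) :
    eval (fun i => (x i : ℂ)) (map Complex.ofRealHom P) = (eval x P : ℝ) := by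
  rw [eval_map]
  exact (eval₂_comp_left Complex.ofRealHom (RingHom.id ℝ) x P).symm

variable [Fintype ι] {P : MvPolynomial ι ℝ} {m : ℕ} {M : ℝ}

theorem norm_eval_add_smul_star_le (hP : P.IsHomogeneous m)
    (hM : ∀ x : ι → ℝ, ‖x‖ ≤ 1 → |eval x P| ≤ M) {z : ι → ℂ} (hz : ‖z‖ ≤ 1) {s : ℂ} (hs : ‖s‖ = 1) :
    ‖eval (z + s • star z) (map Complex.ofRealHom P)‖ ≤ 2 ^ m * M := by
  obtain ⟨v, rfl⟩ := IsAlgClosed.exists_pow_nat_eq s two_pos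
  have hv : ‖v‖ = 1 := by
    rwa [norm_pow, pow_eq_one_iff_of_nonneg (norm_nonneg v) two_ne_zero] at hs
  have hvv : v * conj v = 1 := by rw [Complex.mul_conj', hv]; simp
  set x : ι → ℝ := fun i => (v * conj (z i)).re with hx
  have hx1 : ‖x‖ ≤ 1 := (pi_norm_le_iff_of_nonneg zero_le_one).mpr fun i => by
    refine (Complex.abs_re_le_norm _).trans ?_
    rw [norm_mul, hv, RCLike.norm_conj, one_mul]
    exact (norm_le_pi_norm z i).trans hz
  have hzx : z + v ^ 2 • star z = (2 * v) • fun i => (x i : ℂ) := by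
    ext i
    simp only [hx, Pi.add_apply, Pi.smul_apply, Pi.star_apply, smul_eq_mul, Complex.re_eq_add_conj,
      map_mul, Complex.conj_conj, RCLike.star_def]
    linear_combination (-z i) * hvv
  rw [hzx, eval_smul_of_isHomogeneous (hP.map _), eval_ofReal_map_ofRealHom, norm_mul, norm_pow,
    norm_mul, hv, Complex.norm_real, Complex.norm_two, mul_one]
  gcongr
  exact hM x hx1

theorem norm_eval_map_ofRealHom_le (hP : P.IsHomogeneous m)
    (hM : ∀ x : ι → ℝ, ‖x‖ ≤ 1 → |eval x P| ≤ M) {z : ι → ℂ} (hz : ‖z‖ ≤ 1) :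
    ‖eval z (map Complex.ofRealHom P)‖ ≤ 2 ^ m * M := by
  have hdiff : Differentiable ℂ fun s : ℂ => eval (z + s • star z) (map Complex.ofRealHom P) :=
    fun s => (hasDerivAt_eval_add_smul _ z (star z) s).differentiableAt
  have hmax := Complex.norm_le_of_forall_mem_frontier_norm_le
    (Metric.isBounded_ball (x := (0 : ℂ)) (r := 1)) hdiff.diffContOnCl
    (fun s hs => norm_eval_add_smul_star_le hP hM hz (by
      simpa [frontier_ball (0 : ℂ) one_ne_zero] using hs))
    (subset_closure (Metric.mem_ball_self one_pos))
  simpa using hmax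

end Complexification

section RealConstants

theorem norm_eval_le_sum_norm_coeff {ι 𝕜 : Type*} [Fintype ι] [NormedField 𝕜] (P : MvPolynomial ι 𝕜)
    {z : ι → 𝕜} (hz : ‖z‖ ≤ 1) : ‖eval z P‖ ≤ ∑ α ∈ P.support, ‖coeff α P‖ := by
  rw [eval_eq']
  refine norm_sum_le_of_le _ fun α _ => ?_
  rw [norm_mul, norm_prod]
  refine mul_le_of_le_one_right (norm_nonneg _)
    (prod_le_one (fun _ _ => norm_nonneg _) fun i _ => ?_)
  rw [norm_pow]
  exact pow_le_one₀ (norm_nonneg _) ((norm_le_pi_norm z i).trans hz)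

theorem card_support_le_pow {ι A : Type*} [Fintype ι] [CommSemiring A] {P : MvPolynomial ι A}
    {d : ℕ} (hP : P.totalDegree ≤ d) : #P.support ≤ (d + 1) ^ Fintype.card ι := by
  classical
  calc #P.support ≤ #(Fintype.piFinset fun _ : ι => range (d + 1)) :=
        card_le_card_of_injOn (fun α : ι →₀ ℕ => (α : ι → ℕ))
          (fun α hα => by
            simpa [Nat.lt_succ_iff] using fun i => (apply_le_totalDegree hα i).trans hP)
          DFunLike.coe_injective.injOn
    _ = (d + 1) ^ Fintype.card ι := by simp

variable {n m : ℕ} {P : MvPolynomial (Fin n) ℝ} {M : ℝ}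

theorem supNorm_le (hM : ∀ x : Fin n → ℝ, ‖x‖ ≤ 1 → |eval x P| ≤ M) : supNorm P ≤ M := by
  refine csSup_le ⟨_, 0, by simp, rfl⟩ ?_
  rintro _ ⟨x, hx, rfl⟩
  exact hM x ((pi_norm_le_iff_of_nonneg zero_le_one).mpr hx)

theorem abs_eval_le_supNorm (P : MvPolynomial (Fin n) ℝ) {x : Fin n → ℝ} (hx : ‖x‖ ≤ 1) :
    |eval x P| ≤ supNorm P := by
  refine le_csSup ⟨∑ α ∈ P.support, ‖coeff α P‖, ?_⟩
    ⟨x, (pi_norm_le_iff_of_nonneg zero_le_one).mp hx, rfl⟩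
  rintro _ ⟨y, hy, rfl⟩
  exact norm_eval_le_sum_norm_coeff P ((pi_norm_le_iff_of_nonneg zero_le_one).mpr hy)

theorem supNorm_nonneg (P : MvPolynomial (Fin n) ℝ) : 0 ≤ supNorm P :=
  (abs_nonneg _).trans (abs_eval_le_supNorm P (x := 0) (by simp))

theorem abs_coeff_le_lpNorm {p : ℝ} (hp : 0 < p) {α : Fin n →₀ ℕ} (hα : α ∈ P.support) :
    |coeff α P| ≤ lpNorm p P := by
  calc |coeff α P| = (|coeff α P| ^ p) ^ (1 / p) := by
        rw [one_div, Real.rpow_rpow_inv (abs_nonneg _) hp.ne']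
    _ ≤ lpNorm p P := by
        unfold lpNorm
        gcongr
        exact single_le_sum (f := fun α => |coeff α P| ^ p) (fun _ _ => by positivity) hα

theorem IsPolynomialBHBound.lpNorm_le {K : ℝ≥0} (hm : m ≠ 0) (hK : IsPolynomialBHBound m K)
    (hP : P.IsHomogeneous m) : lpNorm (bhExponent m) P ≤ 2 ^ m * K * supNorm P := by
  have hq := bhExponent_pos hm
  have hsup := supNorm_nonneg P
  have hK' := hK _ (map Complex.ofRealHom P) ⟨2 ^ m * supNorm P, by positivity⟩ (hP.map _)
    fun z hz => norm_eval_map_ofRealHom_le hP (fun x => abs_eval_le_supNorm P) hz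
  rw [support_map_of_injective P Complex.ofRealHom.injective, ← NNReal.coe_le_coe] at hK'
  push_cast [coeff_map, Complex.ofRealHom_eq_coe, Complex.norm_real] at hK'
  calc lpNorm (bhExponent m) P
    _ ≤ ((K * (2 ^ m * supNorm P)) ^ bhExponent m) ^ (1 / bhExponent m) := by
        unfold lpNorm
        gcongr
        exact hK'
    _ = 2 ^ m * K * supNorm P := by
        rw [one_div, Real.rpow_rpow_inv (by positivity) hq.ne']
        ring

theorem BHconst_nonneg (m : ℕ) : 0 ≤ BHconst m :=
  Real.sInf_nonneg fun _ h => h.1.le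

theorem IsPolynomialBHBound.BHconst_le {K : ℝ≥0} (hm : m ≠ 0) (hK : IsPolynomialBHBound m K)
    (hK0 : K ≠ 0) : BHconst m ≤ 2 ^ m * K :=
  csInf_le ⟨0, fun _ h => h.1.le⟩ ⟨by positivity, fun _ _ hP => hK.lpNorm_le hm hP⟩

theorem lpNorm_le_BHconst_mul_supNorm (hm : m ≠ 0) (hP : P.IsHomogeneous m) :
    lpNorm (bhExponent m) P ≤ BHconst m * supNorm P := by
  have hK := isPolynomialBHBound_two_pow hm
  rcases (supNorm_nonneg P).eq_or_lt with h0 | h0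
  · simpa [← h0] using hK.lpNorm_le hm hP
  · have := Nat.pos_of_ne_zero hm
    rw [← div_le_iff₀ h0]
    exact le_csInf ⟨_, by positivity, fun _ _ hQ => hK.lpNorm_le hm hQ⟩ fun _ hD =>
      (div_le_iff₀ h0).mpr (hD.2 _ _ hP)

theorem norm_eval_map_ofRealHom_le_BHconst (hm : m ≠ 0) (hP : P.IsHomogeneous m)
    (hP1 : ∀ x : Fin n → ℝ, ‖x‖ ≤ 1 → |eval x P| ≤ 1) {z : Fin n → ℂ} (hz : ‖z‖ ≤ 1) :
    ‖eval z (map Complex.ofRealHom P)‖ ≤ (m + 1) ^ n * BHconst m := by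
  have hcoeff : ∀ α ∈ P.support, |coeff α P| ≤ BHconst m := fun α hα =>
    calc |coeff α P| ≤ lpNorm (bhExponent m) P := abs_coeff_le_lpNorm (bhExponent_pos hm) hα
      _ ≤ BHconst m * supNorm P := lpNorm_le_BHconst_mul_supNorm hm hP
      _ ≤ BHconst m := mul_le_of_le_one_right (BHconst_nonneg m) (supNorm_le hP1)
  have hcard : (#P.support : ℝ) ≤ (m + 1) ^ n := by
    simpa using Nat.cast_le (α := ℝ).mpr (card_support_le_pow hP.totalDegree_le)
  calc ‖eval z (map Complex.ofRealHom P)‖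
    _ ≤ ∑ α ∈ P.support, |coeff α P| := by
        simpa [support_map_of_injective P Complex.ofRealHom.injective, coeff_map] using
          norm_eval_le_sum_norm_coeff (map Complex.ofRealHom P) hz
    _ ≤ #P.support * BHconst m := by
        rw [← nsmul_eq_mul]
        exact sum_le_card_nsmul _ _ _ hcoeff
    _ ≤ (m + 1) ^ n * BHconst m := by
        have := BHconst_nonneg m
        gcongr

end RealConstants

section LowerBound

/-- `a` is the modulus, at some point of the complex torus, of a real `d`-homogeneous polynomial in
the variables `ι` which is bounded by one on the real cube. -/
def IsTorusValue (ι : Type*) [Fintype ι] (d : ℕ) (a : ℝ) : Prop :=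
  ∃ Q : MvPolynomial ι ℝ, Q.IsHomogeneous d ∧ (∀ x : ι → ℝ, ‖x‖ ≤ 1 → |eval x Q| ≤ 1) ∧
    ∃ z : ι → ℂ, (∀ i, ‖z i‖ = 1) ∧ ‖eval z (map Complex.ofRealHom Q)‖ = a

namespace IsTorusValue

variable {ι κ : Type*} [Fintype ι] [Fintype κ] {d : ℕ} {a : ℝ}

theorem one [Nonempty ι] : IsTorusValue ι 1 1 := by
  obtain ⟨i⟩ := ‹Nonempty ι›
  exact ⟨X i, isHomogeneous_X ℝ i, fun x hx => by simpa using (norm_le_pi_norm x i).trans hx,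
    1, by simp, by simp⟩

theorem of_equiv (e : ι ≃ κ) (h : IsTorusValue ι d a) : IsTorusValue κ d a := by
  obtain ⟨Q, hQ, hb, z, hz, rfl⟩ := h
  refine ⟨rename e Q, hQ.rename_isHomogeneous, fun x hx => ?_, z ∘ e.symm, fun i => hz _, ?_⟩
  · rw [eval_rename]
    exact hb _ ((pi_norm_comp_le x e).trans hx)
  · rw [map_rename, eval_rename, comp_assoc, e.symm_comp_self, comp_id]

theorem pow (h : IsTorusValue ι d a) (r : ℕ) : IsTorusValue ι (d * r) (a ^ r) := by
  obtain ⟨Q, hQ, hb, z, hz, rfl⟩ := h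
  refine ⟨Q ^ r, hQ.pow r, fun x hx => ?_, z, hz, by simp⟩
  rw [map_pow, abs_pow]
  exact pow_le_one₀ (abs_nonneg _) (hb x hx)

theorem add_degree [Nonempty ι] (h : IsTorusValue ι d a) (s : ℕ) : IsTorusValue ι (d + s) a := by
  obtain ⟨i⟩ := ‹Nonempty ι›
  obtain ⟨Q, hQ, hb, z, hz, rfl⟩ := h
  refine ⟨Q * X i ^ s, hQ.mul (isHomogeneous_X_pow i s), fun x hx => ?_, z, hz, by simp [hz]⟩
  rw [map_mul, map_pow, eval_X, abs_mul, abs_pow]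
  exact mul_le_one₀ (hb x hx) (by positivity)
    (pow_le_one₀ (abs_nonneg _) ((norm_le_pi_norm x i).trans hx))

theorem double (hd : d ≠ 0) (h : IsTorusValue ι d a) :
    IsTorusValue (ι ⊕ ι) (d * 2) (2 * a ^ 2) := by
  obtain ⟨Q, hQ, hb, z, hz, rfl⟩ := h
  obtain ⟨ω, hω⟩ := IsAlgClosed.exists_pow_nat_eq Complex.I (Nat.pos_of_ne_zero hd)
  have hω1 : ‖ω‖ = 1 := by
    rw [← pow_eq_one_iff_of_nonneg (norm_nonneg ω) hd, ← norm_pow, hω, Complex.norm_I]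
  refine ⟨rename Sum.inl Q ^ 2 - rename Sum.inr Q ^ 2,
    (hQ.rename_isHomogeneous.pow 2).sub (hQ.rename_isHomogeneous.pow 2), fun x hx => ?_,
    Sum.elim z (ω • z), ?_, ?_⟩
  · have hl := hb (x ∘ Sum.inl) ((pi_norm_comp_le x _).trans hx)
    have hr := hb (x ∘ Sum.inr) ((pi_norm_comp_le x _).trans hx)
    rw [map_sub, map_pow, map_pow, eval_rename, eval_rename]
    exact abs_sub_le_of_nonneg_of_le (sq_nonneg _) ((sq_le_one_iff_abs_le_one _).mpr hl)
      (sq_nonneg _) ((sq_le_one_iff_abs_le_one _).mpr hr)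
  · rintro (i | i) <;> simp [hz, hω1]
  · simp only [map_sub, map_pow, map_rename, eval_rename, Sum.elim_comp_inl, Sum.elim_comp_inr,
      eval_smul_of_isHomogeneous (hQ.map Complex.ofRealHom), hω, mul_pow, Complex.I_sq]
    rw [neg_one_mul, sub_neg_eq_add, ← two_mul, norm_mul, Complex.norm_two, norm_pow]

theorem exists_two_pow (n : ℕ) : ∃ N : ℕ, IsTorusValue (Fin (N + 1)) (2 ^ n) (2 ^ (2 ^ n - 1)) := by
  induction n with
  | zero => exact ⟨0, by simpa using one⟩
  | succ n ih =>
    obtain ⟨N, hN⟩ := ih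
    refine ⟨N + 1 + N, ?_⟩
    have hexp : 2 ^ (n + 1) - 1 = (2 ^ n - 1) * 2 + 1 := by
      have := Nat.one_le_two_pow (n := n)
      omega
    rw [hexp, pow_succ 2 n, pow_succ', pow_mul]
    exact (hN.double (by positivity)).of_equiv (finSumFinEquiv (m := N + 1) (n := N + 1))

theorem pow_le_BHconst {n m : ℕ} {b : ℝ} (hb : 1 ≤ b) (hm : m ≠ 0) (hd : d ≠ 0)
    (h : IsTorusValue (Fin (n + 1)) d (b ^ d)) :
    b ^ m ≤ b ^ d * ((m + 1) ^ (n + 1) * BHconst m) := by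
  obtain ⟨Q, hQ, hQ1, z, hz, hza⟩ := (h.pow (m / d)).add_degree (m % d)
  rw [Nat.div_add_mod] at hQ
  calc b ^ m ≤ b ^ (d + d * (m / d)) := by
        refine pow_le_pow_right₀ hb ?_
        have := Nat.div_add_mod m d
        have := Nat.mod_lt m (Nat.pos_of_ne_zero hd)
        omega
    _ = b ^ d * ‖eval z (map Complex.ofRealHom Q)‖ := by rw [hza, pow_add, pow_mul]
    _ ≤ b ^ d * ((m + 1) ^ (n + 1) * BHconst m) := by
        gcongr
        exact norm_eval_map_ofRealHom_le_BHconst hm hQ hQ1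
          ((pi_norm_le_iff_of_nonneg zero_le_one).mpr fun i => (hz i).le)

end IsTorusValue

end LowerBound

section Asymptotics

theorem eventually_const_mul_pow_mul_pow_lt (C : ℝ) (k : ℕ) {b c : ℝ} (hb : 0 ≤ b) (hbc : b < c) :
    ∀ᶠ m : ℕ in atTop, C * m ^ k * b ^ m < c ^ m := by
  have hc : 0 < c := hb.trans_lt hbc
  have hlim := (tendsto_pow_const_mul_const_pow_of_abs_lt_one k (r := b / c) (by
    rwa [abs_of_nonneg (by positivity), div_lt_one hc])).const_mul C
  rw [mul_zero] at hlim
  filter_upwards [hlim.eventually_lt_const one_pos] with m hm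
  rwa [div_pow, ← mul_assoc, ← mul_div_assoc, div_lt_one (by positivity)] at hm

theorem BHconst_le_const_mul_pow_mul_pow {k m : ℕ} (hk : k ≠ 0) (hkm : k ≤ m) :
    BHconst m ≤ 2 ^ k * (3 * k) * 3 ^ k * m ^ k * (2 * 2 ^ ((k : ℝ)⁻¹)) ^ m := by
  have hk0 := Nat.pos_of_ne_zero hk
  have hm0 := hk0.trans_le hkm
  have hK := ((isPolynomialBHBound_two_pow hk).isMultilinearBHBound hk).isPolynomialBHBound hk hkm
  calc BHconst m ≤ 2 ^ m * (2 ^ ((m : ℝ) / k) * (2 ^ k * (3 * k)) * (3 * m) ^ k) :=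
        mod_cast hK.BHconst_le hm0.ne' (by positivity)
    _ = 2 ^ k * (3 * k) * 3 ^ k * m ^ k * (2 * 2 ^ ((k : ℝ)⁻¹)) ^ m := by
        rw [div_eq_inv_mul, Real.rpow_mul_natCast two_pos.le]
        ring

theorem eventually_BHconst_rpow_inv_lt {k : ℕ} (hk : k ≠ 0) {c : ℝ}
    (hc : 2 * 2 ^ ((k : ℝ)⁻¹) < c) : ∀ᶠ m : ℕ in atTop, BHconst m ^ (m : ℝ)⁻¹ < c := by
  filter_upwards [eventually_const_mul_pow_mul_pow_lt _ k (by positivity) hc,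
    eventually_ge_atTop k, eventually_gt_atTop 0] with m hm hkm hm0
  rw [Real.rpow_inv_lt_iff_of_pos (BHconst_nonneg m) (le_trans (by positivity) hc.le)
    (by positivity), Real.rpow_natCast]
  exact (BHconst_le_const_mul_pow_mul_pow hk hkm).trans_lt hm

theorem IsTorusValue.eventually_lt_BHconst_rpow_inv {n d : ℕ} {b c : ℝ} (hb : 1 ≤ b) (hd : d ≠ 0)
    (h : IsTorusValue (Fin (n + 1)) d (b ^ d)) (hc0 : 0 ≤ c) (hc : c < b) :
    ∀ᶠ m : ℕ in atTop, c < BHconst m ^ (m : ℝ)⁻¹ := by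
  filter_upwards [eventually_const_mul_pow_mul_pow_lt (b ^ d * 2 ^ (n + 1)) (n + 1) hc0 hc,
    eventually_gt_atTop 0] with m hm hm0
  have hBH := BHconst_nonneg m
  rw [Real.lt_rpow_inv_iff_of_pos hc0 hBH (by positivity), Real.rpow_natCast]
  have hm1 : (m : ℝ) + 1 ≤ 2 * m := by
    rw [two_mul]
    gcongr
    exact mod_cast hm0
  refine lt_of_mul_lt_mul_left ?_
    (show 0 ≤ b ^ d * 2 ^ (n + 1) * (m : ℝ) ^ (n + 1) by positivity)
  calc b ^ d * 2 ^ (n + 1) * m ^ (n + 1) * c ^ m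
    _ < b ^ m := hm
    _ ≤ b ^ d * ((m + 1) ^ (n + 1) * BHconst m) := h.pow_le_BHconst hb hm0.ne' hd
    _ ≤ b ^ d * ((2 * m) ^ (n + 1) * BHconst m) := by gcongr
    _ = b ^ d * 2 ^ (n + 1) * m ^ (n + 1) * BHconst m := by ring

theorem eventually_lt_BHconst_rpow_inv (n : ℕ) {c : ℝ} (hc0 : 0 ≤ c)
    (hc : c < 2 ^ (1 - ((2 : ℝ) ^ n)⁻¹)) : ∀ᶠ m : ℕ in atTop, c < BHconst m ^ (m : ℝ)⁻¹ := by
  obtain ⟨N, hN⟩ := IsTorusValue.exists_two_pow n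
  have hb : (1 : ℝ) ≤ 2 ^ (1 - ((2 : ℝ) ^ n)⁻¹) :=
    Real.one_le_rpow one_le_two (sub_nonneg.mpr (inv_le_one_of_one_le₀ (one_le_pow₀ one_le_two)))
  have hpow : ((2 : ℝ) ^ (1 - ((2 : ℝ) ^ n)⁻¹)) ^ (2 ^ n) = 2 ^ (2 ^ n - 1) := by
    rw [← Real.rpow_mul_natCast two_pos.le, ← Real.rpow_natCast 2 (2 ^ n - 1),
      Nat.cast_sub Nat.one_le_two_pow]
    push_cast
    rw [sub_mul, inv_mul_cancel₀ (by positivity), one_mul]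
  rw [← hpow] at hN
  exact hN.eventually_lt_BHconst_rpow_inv hb (by positivity) hc0 hc

theorem tendsto_two_mul_two_rpow_inv :
    Tendsto (fun k : ℕ => 2 * (2 : ℝ) ^ ((k : ℝ)⁻¹)) atTop (nhds 2) := by
  simpa using (tendsto_const_nhds.rpow (tendsto_inv_atTop_nhds_zero_nat (𝕜 := ℝ))
    (Or.inl (two_ne_zero (α := ℝ)))).const_mul 2

theorem tendsto_two_rpow_one_sub_inv_two_pow :
    Tendsto (fun n : ℕ => (2 : ℝ) ^ (1 - ((2 : ℝ) ^ n)⁻¹)) atTop (nhds 2) := by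
  have hinv : Tendsto (fun n : ℕ => ((2 : ℝ) ^ n)⁻¹) atTop (nhds 0) :=
    tendsto_inv_atTop_zero.comp (tendsto_pow_atTop_atTop_of_one_lt one_lt_two)
  simpa using tendsto_const_nhds.rpow (hinv.const_sub 1) (Or.inl (two_ne_zero (α := ℝ)))

end Asymptotics

end BohnenblustHille

open BohnenblustHille in
theorem real_BH_limsup_eq_two_general :
    Tendsto (fun m : ℕ => BHconst m ^ ((m : ℝ)⁻¹)) atTop (nhds 2) := by
  refine tendsto_order.mpr ⟨fun c hc => ?_, fun c hc => ?_⟩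
  · obtain ⟨n, hn⟩ := (tendsto_two_rpow_one_sub_inv_two_pow.eventually_const_lt
      (max_lt hc two_pos)).exists
    filter_upwards [eventually_lt_BHconst_rpow_inv n (le_max_right c 0) hn] with m hm
    exact (le_max_left c 0).trans_lt hm
  · obtain ⟨k, hkc, hk⟩ := ((tendsto_two_mul_two_rpow_inv.eventually_lt_const hc).and
      (eventually_ne_atTop 0)).exists
    exact eventually_BHconst_rpow_inv_lt hk hkc

/-- The real polynomial Bohnenblust–Hille constants satisfy
`limsup_{m→∞} D_{ℝ,m}^{1/m} = 2`. -/
theorem real_BH_limsup_eq_two :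
    limsup (fun m : ℕ => BHconst m ^ ((m : ℝ)⁻¹)) atTop = 2 :=
  real_BH_limsup_eq_two_general.limsup_eq
end

section
/- For every even positive integer m, the real polynomial Bohnenblust–Hille constant satisfies D_{ℝ,m} ≥ (3^{m/2})^{(m+1)/(2m)} / (5/4)^{m/2}. -/
/-!
As `sInf ∅ = 0`, a positive lower bound for the constant includes the Bohnenblust–Hille inequality
itself. To prove the latter, write `P` as the diagonal of a multilinear form whose coefficients
list those of `P`. Comparing second and fourth moments of the form at random signs bounds the `ℓ₂`
norm of its coefficients by `√3 ^ m` times its average absolute value. Applied to slices this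
controls, for every `k`, the sum over `j` of the `ℓ₂` norms of the coefficients with `i k = j`, and
Hölder's inequality interpolates these `m` mixed norms to the exponent `2m/(m+1)` (Blei).
Polarization bounds the sum of the form over all permutations of its arguments by `m ^ m * ‖P‖`,
and no coefficient of `P` exceeds the corresponding coefficient of that sum.

For the lower bound, `∏ j, (x_{2j-1}² - x_{2j}² + x_{2j-1} x_{2j})` is a sum of `3 ^ (m/2)` distinct
monomials with coefficients `±1`, and since `-5/4 b² ≤ a² - b² + a b ≤ 5/4 a²`, its sup norm is at
most `(5/4) ^ (m/2)`.
-/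

open MvPolynomial Filter

open scoped BigOperators

section Rademacher

variable {ι : Type*} [DecidableEq ι]

lemma sum_sign_mul_mulSingle_neg_one (g : ι → ℝ) {a : ι} {s : Finset ι} (ha : a ∉ s) (ε : ι → ℤˣ) :
    ∑ j ∈ s, (((ε j * (Pi.mulSingle a (-1) : ι → ℤˣ) j : ℤˣ) : ℤ) : ℝ) * g j =
      ∑ j ∈ s, ((ε j : ℤ) : ℝ) * g j :=
  Finset.sum_congr rfl fun j hj => by
    simp [Pi.mulSingle_eq_of_ne (ne_of_mem_of_not_mem hj ha)]

lemma sq_intCast_units (u : ℤˣ) : ((u : ℤ) : ℝ) ^ 2 = 1 := by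
  obtain rfl | rfl := Int.units_eq_one_or u <;> norm_num

variable [Fintype ι]

lemma expect_sign_flip (a : ι) (F : (ι → ℤˣ) → ℝ) :
    𝔼 ε, F ε = 𝔼 ε, (F ε + F (ε * Pi.mulSingle a (-1))) / 2 := by
  have flip : 𝔼 ε, F (ε * Pi.mulSingle a (-1)) = 𝔼 ε, F ε :=
    Fintype.expect_equiv (Equiv.mulRight (Pi.mulSingle a (-1))) _ _ fun _ => rfl
  rw [← Finset.expect_div, Finset.expect_add_distrib, flip, add_self_div_two]

lemma expect_sq_sum_sign_mul (g : ι → ℝ) (s : Finset ι) :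
    𝔼 ε : ι → ℤˣ, (∑ j ∈ s, ((ε j : ℤ) : ℝ) * g j) ^ 2 = ∑ j ∈ s, g j ^ 2 := by
  induction s using Finset.induction_on with
  | empty => simp
  | insert a s ha ih =>
    have average (ε : ι → ℤˣ) :
        ((((ε a : ℤ) : ℝ) * g a + ∑ j ∈ s, ((ε j : ℤ) : ℝ) * g j) ^ 2 +
          (-((ε a : ℤ) : ℝ) * g a + ∑ j ∈ s, ((ε j : ℤ) : ℝ) * g j) ^ 2) / 2 =
        g a ^ 2 + (∑ j ∈ s, ((ε j : ℤ) : ℝ) * g j) ^ 2 := by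
      linear_combination g a ^ 2 * sq_intCast_units (ε a)
    rw [expect_sign_flip a]
    simp only [Finset.sum_insert ha, sum_sign_mul_mulSingle_neg_one g ha, Pi.mul_apply,
      Pi.mulSingle_eq_same, mul_neg_one, Units.val_neg, Int.cast_neg, average,
      Finset.expect_add_distrib, Fintype.expect_const, ih]

lemma expect_pow_four_sum_sign_mul_le (g : ι → ℝ) (s : Finset ι) :
    𝔼 ε : ι → ℤˣ, (∑ j ∈ s, ((ε j : ℤ) : ℝ) * g j) ^ 4 ≤ 3 * (∑ j ∈ s, g j ^ 2) ^ 2 := by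
  induction s using Finset.induction_on with
  | empty => simp
  | insert a s ha ih =>
    have average (ε : ι → ℤˣ) :
        ((((ε a : ℤ) : ℝ) * g a + ∑ j ∈ s, ((ε j : ℤ) : ℝ) * g j) ^ 4 +
          (-((ε a : ℤ) : ℝ) * g a + ∑ j ∈ s, ((ε j : ℤ) : ℝ) * g j) ^ 4) / 2 =
        g a ^ 4 + 6 * g a ^ 2 * (∑ j ∈ s, ((ε j : ℤ) : ℝ) * g j) ^ 2 +
          (∑ j ∈ s, ((ε j : ℤ) : ℝ) * g j) ^ 4 := by
      linear_combination
        (g a ^ 4 * (((ε a : ℤ) : ℝ) ^ 2 + 1) +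
          6 * g a ^ 2 * (∑ j ∈ s, ((ε j : ℤ) : ℝ) * g j) ^ 2) * sq_intCast_units (ε a)
    rw [expect_sign_flip a]
    simp only [Finset.sum_insert ha, sum_sign_mul_mulSingle_neg_one g ha, Pi.mul_apply,
      Pi.mulSingle_eq_same, mul_neg_one, Units.val_neg, Int.cast_neg, average,
      Finset.expect_add_distrib, Fintype.expect_const, ← Finset.mul_expect,
      expect_sq_sum_sign_mul]
    nlinarith [sq_nonneg (g a ^ 2)]

end Rademacher

lemma sum_sq_pow_three_le {α : Type*} (s : Finset α) (f : α → ℝ) :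
    (∑ i ∈ s, f i ^ 2) ^ 3 ≤ (∑ i ∈ s, |f i|) ^ 2 * ∑ i ∈ s, f i ^ 4 := by
  have sq_sum_sq_le : (∑ i ∈ s, f i ^ 2) ^ 2 ≤ (∑ i ∈ s, |f i|) * ∑ i ∈ s, |f i| ^ 3 :=
    Finset.sum_sq_le_sum_mul_sum_of_sq_le_mul s (fun _ _ => abs_nonneg _) (fun _ _ => by positivity)
      fun i _ => by rw [← sq_abs (f i)]; exact le_of_eq (by ring)
  have sq_sum_pow_three_le : (∑ i ∈ s, |f i| ^ 3) ^ 2 ≤ (∑ i ∈ s, f i ^ 2) * ∑ i ∈ s, f i ^ 4 :=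
    Finset.sum_sq_le_sum_mul_sum_of_sq_le_mul s (fun _ _ => sq_nonneg _) (fun _ _ => by positivity)
      fun i _ => by rw [← pow_mul, ← pow_add, (by decide : Even (3 * 2)).pow_abs]
  obtain h | h := (Finset.sum_nonneg fun i (_ : i ∈ s) => sq_nonneg (f i)).eq_or_lt
  · rw [← h, zero_pow three_ne_zero]
    positivity
  · refine le_of_mul_le_mul_left ?_ h
    calc (∑ i ∈ s, f i ^ 2) * (∑ i ∈ s, f i ^ 2) ^ 3 = ((∑ i ∈ s, f i ^ 2) ^ 2) ^ 2 := by ring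
      _ ≤ ((∑ i ∈ s, |f i|) * ∑ i ∈ s, |f i| ^ 3) ^ 2 := by gcongr
      _ = (∑ i ∈ s, |f i|) ^ 2 * (∑ i ∈ s, |f i| ^ 3) ^ 2 := mul_pow _ _ _
      _ ≤ (∑ i ∈ s, |f i|) ^ 2 * ((∑ i ∈ s, f i ^ 2) * ∑ i ∈ s, f i ^ 4) := by gcongr
      _ = (∑ i ∈ s, f i ^ 2) * ((∑ i ∈ s, |f i|) ^ 2 * ∑ i ∈ s, f i ^ 4) := by ring

lemma expect_sq_pow_three_le {α : Type*} [Fintype α] (f : α → ℝ) :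
    (𝔼 i, f i ^ 2) ^ 3 ≤ (𝔼 i, |f i|) ^ 2 * 𝔼 i, f i ^ 4 := by
  simp only [Fintype.expect_eq_sum_div_card, div_pow, div_mul_div_comm, ← pow_succ]
  gcongr
  exact sum_sq_pow_three_le _ f

lemma expect_sq_sum_le {α β : Type*} [Fintype α] [Fintype β] {f : β → α → ℝ} {a : β → ℝ} {C : ℝ}
    (hC : 0 ≤ C) (ha : ∀ j, 0 ≤ a j) (hf : ∀ j, 𝔼 i, f j i ^ 2 ≤ C * a j ^ 2) :
    𝔼 i, (∑ j, f j i) ^ 2 ≤ C * (∑ j, a j) ^ 2 := by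
  have cross j k : 𝔼 i, f j i * f k i ≤ C * (a j * a k) := by
    refine abs_le_of_sq_le_sq' ?_ (mul_nonneg hC (mul_nonneg (ha j) (ha k))) |>.2
    calc (𝔼 i, f j i * f k i) ^ 2 ≤ (𝔼 i, f j i ^ 2) * 𝔼 i, f k i ^ 2 :=
          Finset.expect_mul_sq_le_sq_mul_sq _ _ _
      _ ≤ (C * a j ^ 2) * (C * a k ^ 2) := by
          gcongr
          exacts [hf j, hf k]
      _ = (C * (a j * a k)) ^ 2 := by ring
  calc 𝔼 i, (∑ j, f j i) ^ 2 = ∑ j, ∑ k, 𝔼 i, f j i * f k i := by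
        simp only [sq, Finset.sum_mul_sum, Finset.expect_sum_comm]
    _ ≤ ∑ j, ∑ k, C * (a j * a k) := by
        gcongr with j _ k _
        exact cross j k
    _ = C * (∑ j, a j) ^ 2 := by
        rw [sq, Finset.sum_mul_sum]
        simp only [Finset.mul_sum]

section FinCons

variable {m : ℕ} {X M : Type*} [Fintype X] [AddCommMonoid M]

lemma sum_fin_cons (F : (Fin (m + 1) → X) → M) :
    ∑ x, F x = ∑ a, ∑ x : Fin m → X, F (Fin.cons a x) := by
  rw [← Fintype.sum_prod_type']
  exact (Fintype.sum_equiv (Fin.consEquiv fun _ => X) _ _ fun _ => rfl).symm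

lemma expect_fin_cons [Module ℚ≥0 M] (F : (Fin (m + 1) → X) → M) :
    𝔼 x, F x = 𝔼 x : Fin m → X, 𝔼 a, F (Fin.cons a x) := by
  rw [Finset.expect_comm, ← Finset.expect_product', Finset.univ_product_univ]
  exact (Fintype.expect_equiv (Fin.consEquiv fun _ => X) _ _ fun _ => rfl).symm

end FinCons

theorem sum_prod_rpow_le_prod_sum_rpow {ι κ : Type*} [Fintype ι] [Fintype κ] {f : κ → ι → ℝ}
    (hf : ∀ k i, 0 ≤ f k i) {w : κ → ℝ} (hw : ∀ k, 0 ≤ w k) (hw_sum : ∑ k, w k = 1) :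
    ∑ i, ∏ k, f k i ^ w k ≤ ∏ k, (∑ i, f k i) ^ w k := by
  set S : κ → ℝ := fun k => ∑ i, f k i
  have hS k : 0 ≤ S k := Finset.sum_nonneg fun i _ => hf k i
  have factor k i : f k i ^ w k = (f k i / S k) ^ w k * S k ^ w k := by
    rw [← Real.mul_rpow (div_nonneg (hf k i) (hS k)) (hS k),
      div_mul_cancel_of_imp fun h =>
        (Finset.sum_eq_zero_iff_of_nonneg fun i _ => hf k i).1 h i (Finset.mem_univ i)]
  have normalized : ∑ i, ∏ k, (f k i / S k) ^ w k ≤ 1 :=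
    calc ∑ i, ∏ k, (f k i / S k) ^ w k
        ≤ ∑ i, ∑ k, w k * (f k i / S k) := Finset.sum_le_sum fun i _ =>
          Real.geom_mean_le_arith_mean_weighted _ _ _ (fun k _ => hw k) hw_sum
            fun k _ => div_nonneg (hf k i) (hS k)
      _ = ∑ k, w k * (S k / S k) := by
          simp only [S, Finset.sum_div, Finset.mul_sum]
          exact Finset.sum_comm
      _ ≤ ∑ k, w k * 1 := by
          gcongr with k
          exacts [hw k, div_self_le_one _]
      _ = 1 := by simpa using hw_sum
  calc ∑ i, ∏ k, f k i ^ w k = (∑ i, ∏ k, (f k i / S k) ^ w k) * ∏ k, S k ^ w k := by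
        simp only [factor, Finset.prod_mul_distrib, Finset.sum_mul]
    _ ≤ 1 * ∏ k, S k ^ w k := by
        gcongr
        exact Finset.prod_nonneg fun k _ => Real.rpow_nonneg (hS k) _
    _ = ∏ k, S k ^ w k := one_mul _

section SliceNorm

variable {ι κ : Type*} [Fintype ι] [Fintype κ] [DecidableEq ι] [DecidableEq κ]

/-- The `ℓ₂` norm of the slice `{i | i k = j}` of a coefficient array; summing over `j` gives the
mixed `(ℓ₁, ℓ₂)` norm from which Blei's interpolation starts. -/
noncomputable def sliceNorm (A : (κ → ι) → ℝ) (k : κ) (j : ι) : ℝ :=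
  √(∑ i with i k = j, A i ^ 2)

lemma sliceNorm_nonneg (A : (κ → ι) → ℝ) (k : κ) (j : ι) : 0 ≤ sliceNorm A k j :=
  Real.sqrt_nonneg _

lemma sq_sliceNorm (A : (κ → ι) → ℝ) (k : κ) (j : ι) :
    sliceNorm A k j ^ 2 = ∑ i with i k = j, A i ^ 2 :=
  Real.sq_sqrt (Finset.sum_nonneg fun _ _ => sq_nonneg _)

lemma sq_le_sq_sliceNorm (A : (κ → ι) → ℝ) (k : κ) (i : κ → ι) :
    A i ^ 2 ≤ sliceNorm A k (i k) ^ 2 := by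
  rw [sq_sliceNorm]
  exact Finset.single_le_sum (f := fun i => A i ^ 2) (fun _ _ => sq_nonneg _) (by simp)

lemma sum_sq_div_sliceNorm (A : (κ → ι) → ℝ) (k : κ) :
    ∑ i, A i ^ 2 / sliceNorm A k (i k) = ∑ j, sliceNorm A k j := by
  rw [← Finset.sum_fiberwise Finset.univ (fun i => i k)]
  refine Finset.sum_congr rfl fun j _ => ?_
  calc ∑ i with i k = j, A i ^ 2 / sliceNorm A k (i k)
      = ∑ i with i k = j, A i ^ 2 / sliceNorm A k j :=
        Finset.sum_congr rfl fun i hi => by rw [(Finset.mem_filter.1 hi).2]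
    _ = sliceNorm A k j := by
        rw [← Finset.sum_div, ← sq_sliceNorm, sq, mul_self_div_self]

lemma abs_rpow_eq_prod_sliceNorm (A : (κ → ι) → ℝ) (i : κ → ι) :
    |A i| ^ (2 * Fintype.card κ / (Fintype.card κ + 1) : ℝ) =
      (∏ k, sliceNorm A k (i k)) ^ (1 / (Fintype.card κ + 1) : ℝ) *
        ∏ k, (A i ^ 2 / sliceNorm A k (i k)) ^ (1 / (Fintype.card κ + 1) : ℝ) := by
  have hb k : 0 ≤ sliceNorm A k (i k) := sliceNorm_nonneg A k (i k)
  have cancel k : sliceNorm A k (i k) * (A i ^ 2 / sliceNorm A k (i k)) = |A i| ^ (2 : ℝ) := by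
    rw [mul_div_cancel_of_imp', Real.rpow_two, sq_abs]
    intro h
    simpa [h, sq_nonpos_iff] using sq_le_sq_sliceNorm A k i
  rw [← Real.finsetProd_rpow _ _ fun k _ => hb k, ← Finset.prod_mul_distrib]
  simp_rw [← Real.mul_rpow (hb _) (div_nonneg (sq_nonneg _) (hb _)), cancel]
  rw [Finset.prod_const, Finset.card_univ, ← Real.rpow_mul (abs_nonneg _),
    ← Real.rpow_mul_natCast (abs_nonneg _)]
  congr 1
  ring

theorem sum_abs_rpow_le_of_sum_sliceNorm_le (A : (κ → ι) → ℝ) {M : ℝ} (hM : 0 ≤ M)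
    (hA : ∀ k, ∑ j, sliceNorm A k j ≤ M) :
    ∑ i, |A i| ^ (2 * Fintype.card κ / (Fintype.card κ + 1) : ℝ) ≤
      M ^ (2 * Fintype.card κ / (Fintype.card κ + 1) : ℝ) := by
  set w : ℝ := 1 / (Fintype.card κ + 1) with hw
  have hw₀ : 0 ≤ w := by positivity
  have hb := sliceNorm_nonneg A
  let f : Option κ → (κ → ι) → ℝ := fun o i =>
    o.elim (∏ k, sliceNorm A k (i k)) fun k => A i ^ 2 / sliceNorm A k (i k)
  have hf o i : 0 ≤ f o i := by
    cases o with
    | none => exact Finset.prod_nonneg fun k _ => hb k (i k)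
    | some k => exact div_nonneg (sq_nonneg _) (hb k (i k))
  have hw₁ : ∑ _ : Option κ, w = 1 := by
    simp only [hw, Finset.sum_const, Finset.card_univ, Fintype.card_option, nsmul_eq_mul]
    push_cast
    field_simp
  have sum_none : ∑ i, f none i ≤ M ^ Fintype.card κ := by
    calc ∑ i : κ → ι, ∏ k, sliceNorm A k (i k) = ∏ k, ∑ j, sliceNorm A k j :=
          (Fintype.prod_sum _).symm
      _ ≤ ∏ _ : κ, M := Finset.prod_le_prod
          (fun k _ => Finset.sum_nonneg fun j _ => hb k j) fun k _ => hA k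
      _ = M ^ Fintype.card κ := by simp
  have sum_some k : ∑ i, f (some k) i ≤ M := (sum_sq_div_sliceNorm A k).trans_le (hA k)
  have sum_nonneg o : 0 ≤ ∑ i, f o i := Finset.sum_nonneg fun i _ => hf o i
  calc ∑ i, |A i| ^ (2 * Fintype.card κ / (Fintype.card κ + 1) : ℝ)
      = ∑ i, ∏ o, f o i ^ w := by
        simp only [abs_rpow_eq_prod_sliceNorm, Fintype.prod_option, f, Option.elim, hw]
    _ ≤ ∏ o, (∑ i, f o i) ^ w := sum_prod_rpow_le_prod_sum_rpow hf (fun _ => hw₀) hw₁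
    _ ≤ (M ^ Fintype.card κ) ^ w * ∏ _ : κ, M ^ w := by
        rw [Fintype.prod_option]
        gcongr with k
        · exact Finset.prod_nonneg fun k _ => Real.rpow_nonneg (sum_nonneg _) _
        · exact sum_nonneg none
        · exact fun k _ => Real.rpow_nonneg (sum_nonneg _) _
        · exact sum_nonneg (some k)
        · exact sum_some k
    _ = M ^ (2 * Fintype.card κ / (Fintype.card κ + 1) : ℝ) := by
        rw [Finset.prod_const, Finset.card_univ, ← Real.rpow_natCast_mul hM,
          ← Real.rpow_mul_natCast hM, ← Real.rpow_add_of_nonneg hM (by positivity) (by positivity)]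
        congr 1
        rw [hw]
        ring

end SliceNorm

section MultilinearForm

variable {κ ι : Type*} [DecidableEq ι]

/-- The coefficients `L(e_{i₁}, …, e_{iₘ})` of a multilinear form in the standard basis. -/
def basisCoeff (L : MultilinearMap ℝ (fun _ : κ => ι → ℝ) ℝ) (i : κ → ι) : ℝ :=
  L fun k => Pi.single (i k) 1

/-- The values of a multilinear form at the vertices of the product of cubes; averaging them over
all signs makes the form a Rademacher chaos. -/
def signEval (L : MultilinearMap ℝ (fun _ : κ => ι → ℝ) ℝ) (ε : κ → ι → ℤˣ) : ℝ :=
  L fun k j => ((ε k j : ℤ) : ℝ)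

lemma signEval_eq_basisCoeff [IsEmpty κ] (L : MultilinearMap ℝ (fun _ : κ => ι → ℝ) ℝ)
    (ε : κ → ι → ℤˣ) (i : κ → ι) : signEval L ε = basisCoeff L i :=
  congrArg L (Subsingleton.elim _ _)

variable {m : ℕ}

lemma basisCoeff_cons (L : MultilinearMap ℝ (fun _ : Fin (m + 1) => ι → ℝ) ℝ) (j : ι)
    (i : Fin m → ι) :
    basisCoeff L (Fin.cons j i) = basisCoeff (L.curryLeft (Pi.single j 1)) i := by
  rw [basisCoeff, basisCoeff, L.curryLeft_apply]
  congr 1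
  ext k : 1
  cases k using Fin.cases <;> rfl

variable [Fintype ι]

lemma signEval_cons (L : MultilinearMap ℝ (fun _ : Fin (m + 1) => ι → ℝ) ℝ) (a : ι → ℤˣ)
    (ε : Fin m → ι → ℤˣ) :
    signEval L (Fin.cons a ε) =
      ∑ j, ((a j : ℤ) : ℝ) * signEval (L.curryLeft (Pi.single j 1)) ε := by
  have cons_eq : (fun k j => (((Fin.cons a ε : Fin (m + 1) → ι → ℤˣ) k j : ℤ) : ℝ)) =
      Fin.cons (fun j => ((a j : ℤ) : ℝ)) fun k j => ((ε k j : ℤ) : ℝ) := by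
    ext k : 1
    cases k using Fin.cases <;> rfl
  have single_eq (j : ι) : (fun j' => if j = j' then (1 : ℝ) else 0) = Pi.single j 1 := by
    ext j'
    simp [Pi.single_apply, eq_comm]
  rw [signEval, cons_eq, ← L.curryLeft_apply, L.curryLeft.pi_apply_eq_sum_univ]
  simp only [single_eq, sum_apply, smul_apply, smul_eq_mul, signEval]

lemma expect_sq_signEval (L : MultilinearMap ℝ (fun _ : Fin m => ι → ℝ) ℝ) :
    𝔼 ε, signEval L ε ^ 2 = ∑ i, basisCoeff L i ^ 2 := by
  induction m with
  | zero => simp [signEval_eq_basisCoeff L _ default]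
  | succ m ih =>
    simp only [expect_fin_cons, signEval_cons, expect_sq_sum_sign_mul, Finset.expect_sum_comm, ih,
      sum_fin_cons, basisCoeff_cons]

lemma expect_pow_four_signEval_le (L : MultilinearMap ℝ (fun _ : Fin m => ι → ℝ) ℝ) :
    𝔼 ε, signEval L ε ^ 4 ≤ 3 ^ m * (∑ i, basisCoeff L i ^ 2) ^ 2 := by
  induction m with
  | zero => simp [signEval_eq_basisCoeff L _ default, ← pow_mul]
  | succ m ih =>
    have chaos : 𝔼 ε : Fin m → ι → ℤˣ,
        (∑ j, signEval (L.curryLeft (Pi.single j 1)) ε ^ 2) ^ 2 ≤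
          3 ^ m * (∑ j, ∑ i, basisCoeff (L.curryLeft (Pi.single j 1)) i ^ 2) ^ 2 := by
      refine expect_sq_sum_le (by positivity)
        (fun j => Finset.sum_nonneg fun i _ => sq_nonneg _) fun j => ?_
      simpa only [← pow_mul] using ih (L.curryLeft (Pi.single j 1))
    calc 𝔼 ε, signEval L ε ^ 4
        = 𝔼 ε, 𝔼 a : ι → ℤˣ, (∑ j, ((a j : ℤ) : ℝ) *
            signEval (L.curryLeft (Pi.single j 1)) ε) ^ 4 := by
          simp only [expect_fin_cons, signEval_cons]
      _ ≤ 𝔼 ε, 3 * (∑ j, signEval (L.curryLeft (Pi.single j 1)) ε ^ 2) ^ 2 :=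
          Finset.expect_le_expect fun ε _ => expect_pow_four_sum_sign_mul_le _ _
      _ ≤ 3 * (3 ^ m * (∑ j, ∑ i, basisCoeff (L.curryLeft (Pi.single j 1)) i ^ 2) ^ 2) := by
          rw [← Finset.mul_expect]
          gcongr
      _ = 3 ^ (m + 1) * (∑ i, basisCoeff L i ^ 2) ^ 2 := by
          simp only [sum_fin_cons, basisCoeff_cons]
          ring

theorem sqrt_sum_sq_basisCoeff_le (L : MultilinearMap ℝ (fun _ : Fin m => ι → ℝ) ℝ) :
    √(∑ i, basisCoeff L i ^ 2) ≤ √3 ^ m * 𝔼 ε, |signEval L ε| := by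
  set S := ∑ i, basisCoeff L i ^ 2
  have hE : 0 ≤ 𝔼 ε, |signEval L ε| := Finset.expect_nonneg fun _ _ => abs_nonneg _
  refine Real.sqrt_le_iff.2 ⟨mul_nonneg (by positivity) hE, ?_⟩
  obtain hS | hS := (show 0 ≤ S from Finset.sum_nonneg fun _ _ => sq_nonneg _).eq_or_lt
  · rw [← hS]
    positivity
  refine le_of_mul_le_mul_right ?_ (pow_pos hS 2)
  calc S * S ^ 2 = (𝔼 ε, signEval L ε ^ 2) ^ 3 := by rw [expect_sq_signEval]; ring
    _ ≤ (𝔼 ε, |signEval L ε|) ^ 2 * 𝔼 ε, signEval L ε ^ 4 := expect_sq_pow_three_le _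
    _ ≤ (𝔼 ε, |signEval L ε|) ^ 2 * (3 ^ m * S ^ 2) := by
        gcongr
        exact expect_pow_four_signEval_le L
    _ = (√3 ^ m * 𝔼 ε, |signEval L ε|) ^ 2 * S ^ 2 := by
        rw [mul_pow, ← pow_mul, mul_comm m 2, pow_mul √3, Real.sq_sqrt zero_le_three]
        ring

end MultilinearForm

section Slices

variable {κ ι : Type*} [DecidableEq κ] [DecidableEq ι]

/-- The form obtained from `L` by keeping only the `j`-th coordinate of its `k`-th argument; its
coefficients are those of `L` on the slice `{i | i k = j}`. -/
def slice (L : MultilinearMap ℝ (fun _ : κ => ι → ℝ) ℝ) (k : κ) (j : ι) :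
    MultilinearMap ℝ (fun _ : κ => ι → ℝ) ℝ :=
  L.compLinearMap <| Function.update (fun _ => LinearMap.id) k
    (LinearMap.single ℝ (fun _ => ℝ) j ∘ₗ LinearMap.proj j)

lemma slice_apply (L : MultilinearMap ℝ (fun _ : κ => ι → ℝ) ℝ) (k : κ) (j : ι) (x : κ → ι → ℝ) :
    slice L k j x = L (Function.update x k (Pi.single j (x k j))) := by
  rw [slice, MultilinearMap.compLinearMap_apply]
  congr 1
  ext l : 1
  obtain rfl | hl := eq_or_ne l k <;> simp [*]

lemma basisCoeff_slice (L : MultilinearMap ℝ (fun _ : κ => ι → ℝ) ℝ) (k : κ) (j : ι) (i : κ → ι) :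
    basisCoeff (slice L k j) i = if i k = j then basisCoeff L i else 0 := by
  rw [basisCoeff, slice_apply]
  split_ifs with h
  · subst h
    simp [basisCoeff]
  · rw [Pi.single_eq_of_ne (Ne.symm h), Pi.single_zero, L.map_update_zero]

variable [Fintype ι]

lemma sum_mul_signEval_slice (L : MultilinearMap ℝ (fun _ : κ => ι → ℝ) ℝ) (k : κ) (t : ι → ℤˣ)
    (ε : κ → ι → ℤˣ) :
    ∑ j, ((t j : ℤ) : ℝ) * signEval (slice L k j) ε =
      signEval L (Function.update ε k (t * ε k)) := by
  set x : κ → ι → ℝ := fun l j => ((ε l j : ℤ) : ℝ) with hx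
  have update_eq : (fun l j => ((Function.update ε k (t * ε k) l j : ℤ) : ℝ)) =
      Function.update x k (∑ j, Pi.single j (((t j : ℤ) : ℝ) * x k j)) := by
    ext l : 1
    obtain rfl | hl := eq_or_ne l k
    · ext j
      simp [hx, Finset.sum_pi_single]
    · simp [hx, hl]
  rw [signEval, update_eq, L.map_update_sum]
  refine Finset.sum_congr rfl fun j _ => ?_
  rw [signEval, slice_apply, ← smul_eq_mul, ← L.map_update_smul, ← Pi.single_smul', smul_eq_mul]

lemma exists_units_mul_eq_abs (y : ℝ) : ∃ u : ℤˣ, ((u : ℤ) : ℝ) * y = |y| := by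
  obtain h | h := abs_choice y
  · exact ⟨1, by simp [h]⟩
  · exact ⟨-1, by simp [h]⟩

lemma sum_abs_signEval_slice_le (L : MultilinearMap ℝ (fun _ : κ => ι → ℝ) ℝ) {M : ℝ}
    (hM : ∀ ε, |signEval L ε| ≤ M) (k : κ) (ε : κ → ι → ℤˣ) :
    ∑ j, |signEval (slice L k j) ε| ≤ M := by
  choose t ht using fun j => exists_units_mul_eq_abs (signEval (slice L k j) ε)
  calc ∑ j, |signEval (slice L k j) ε| = signEval L (Function.update ε k (t * ε k)) := by
        simp only [← ht, sum_mul_signEval_slice]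
    _ ≤ M := (le_abs_self _).trans (hM _)

variable {m : ℕ}

lemma sum_sliceNorm_basisCoeff_le (L : MultilinearMap ℝ (fun _ : Fin m => ι → ℝ) ℝ) {M : ℝ}
    (hM : ∀ ε, |signEval L ε| ≤ M) (k : Fin m) :
    ∑ j, sliceNorm (basisCoeff L) k j ≤ √3 ^ m * M := by
  have sliceNorm_eq j : sliceNorm (basisCoeff L) k j = √(∑ i, basisCoeff (slice L k j) i ^ 2) := by
    simp [sliceNorm, Finset.sum_filter, basisCoeff_slice, ite_pow]
  calc ∑ j, sliceNorm (basisCoeff L) k j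
      ≤ ∑ j, √3 ^ m * 𝔼 ε, |signEval (slice L k j) ε| := by
        gcongr with j
        rw [sliceNorm_eq]
        exact sqrt_sum_sq_basisCoeff_le _
    _ = √3 ^ m * 𝔼 ε, ∑ j, |signEval (slice L k j) ε| := by
        rw [← Finset.mul_sum, Finset.expect_sum_comm]
    _ ≤ √3 ^ m * M := by
        gcongr
        exact Finset.expect_le Finset.univ_nonempty fun ε _ =>
          sum_abs_signEval_slice_le L hM k ε

theorem sum_abs_basisCoeff_rpow_le (L : MultilinearMap ℝ (fun _ : Fin m => ι → ℝ) ℝ) {M : ℝ}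
    (hM : ∀ ε, |signEval L ε| ≤ M) :
    ∑ i, |basisCoeff L i| ^ (2 * m / (m + 1) : ℝ) ≤ (√3 ^ m * M) ^ (2 * m / (m + 1) : ℝ) := by
  have hM₀ : 0 ≤ M := (abs_nonneg _).trans (hM 1)
  simpa using sum_abs_rpow_le_of_sum_sliceNorm_le (basisCoeff L)
    (mul_nonneg (by positivity) hM₀) (sum_sliceNorm_basisCoeff_le L hM)

end Slices

section Polarization

variable {κ : Type*} [Fintype κ] [DecidableEq κ]

lemma sum_prod_sign_mul_prod_sign_comp (φ : κ → κ) :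
    ∑ ε : κ → ℤˣ, (((∏ k, ε k) * ∏ j, ε (φ j) : ℤˣ) : ℤ) =
      if φ.Bijective then 2 ^ Fintype.card κ else 0 := by
  split_ifs with h
  · simp [h.prod_comp fun _ => _, Int.units_mul_self]
  · let χ : (κ → ℤˣ) →* ℤˣ :=
      (∏ k, Pi.evalMonoidHom _ k) * ∏ j, Pi.evalMonoidHom _ (φ j)
    have hχ ε : χ ε = (∏ k, ε k) * ∏ j, ε (φ j) := by simp [χ]
    obtain ⟨k, hk⟩ := not_forall.1 (mt Finite.surjective_iff_bijective.1 h)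
    have hχk : χ (Pi.mulSingle k (-1)) = -1 := by
      rw [hχ, Finset.prod_pi_mulSingle', if_pos (Finset.mem_univ k),
        Finset.prod_eq_one fun j _ => Pi.mulSingle_eq_of_ne (fun h => hk ⟨j, h⟩) _, mul_one]
    simpa [hχ] using sum_hom_units_eq_zero ((Units.coeHom ℤ).comp χ) fun h => by
      simpa [hχk] using DFunLike.congr_fun h (Pi.mulSingle k (-1))

/-- The sum of a multilinear map over all permutations of its arguments, i.e. `m!` times its
symmetrization. -/
def permSum {R E F : Type*} [Semiring R] [AddCommMonoid E] [Module R E] [AddCommMonoid F]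
    [Module R F] (L : MultilinearMap R (fun _ : κ => E) F) :
    MultilinearMap R (fun _ : κ => E) F :=
  ∑ τ : Equiv.Perm κ, L.domDomCongr τ

lemma permSum_apply {R E F : Type*} [Semiring R] [AddCommMonoid E] [Module R E]
    [AddCommMonoid F] [Module R F] (L : MultilinearMap R (fun _ : κ => E) F) (x : κ → E) :
    permSum L x = ∑ τ : Equiv.Perm κ, L fun k => x (τ k) := by
  simp [permSum]

theorem sum_prod_sign_smul_map_sum_sign_smul {R E F : Type*} [Ring R] [AddCommGroup E]
    [Module R E] [AddCommGroup F] [Module R F]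
    (L : MultilinearMap R (fun _ : κ => E) F) (x : κ → E) :
    ∑ ε : κ → ℤˣ, (∏ k, ε k) • L (fun _ => ∑ k, ε k • x k) =
      2 ^ Fintype.card κ • permSum L x := by
  have expand (ε : κ → ℤˣ) : L (fun _ => ∑ k, ε k • x k) =
      ∑ φ : κ → κ, (∏ j, ε (φ j)) • L fun j => x (φ j) := by
    rw [L.map_sum]
    refine Finset.sum_congr rfl fun φ _ => ?_
    simpa [Units.smul_def] using
      (L.restrictScalars ℤ).map_smul_univ (fun j => ((ε (φ j)) : ℤ)) fun j => x (φ j)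
  calc ∑ ε : κ → ℤˣ, (∏ k, ε k) • L (fun _ => ∑ k, ε k • x k)
      = ∑ φ : κ → κ, (∑ ε : κ → ℤˣ, (((∏ k, ε k) * ∏ j, ε (φ j) : ℤˣ) : ℤ)) •
          L fun j => x (φ j) := by
        simp only [expand, Finset.smul_sum, smul_smul, Finset.sum_smul]
        exact Finset.sum_comm
    _ = ∑ φ : κ → κ with φ.Bijective, 2 ^ Fintype.card κ • L fun j => x (φ j) := by
        simp only [sum_prod_sign_mul_prod_sign_comp, Finset.sum_filter, ite_smul, zero_smul,
          ← natCast_zsmul, Nat.cast_pow, Nat.cast_ofNat]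
    _ = 2 ^ Fintype.card κ • permSum L x := by
        rw [permSum_apply, ← Finset.smul_sum, ← Finset.sum_subtype_eq_sum_filter,
          Finset.subtype_univ]
        exact congrArg _ (Fintype.sum_equiv Equiv.bijectiveEquiv _ _ fun _ => rfl)

end Polarization

section PolarizationBound

variable {κ E F : Type*} [Fintype κ] [SeminormedAddCommGroup E] [NormedSpace ℝ E]
  [SeminormedAddCommGroup F] [NormedSpace ℝ F]

lemma norm_map_const_le (L : MultilinearMap ℝ (fun _ : κ => E) F) {B C : ℝ}
    (hB : ∀ y, ‖y‖ ≤ 1 → ‖L fun _ => y‖ ≤ B) (hC : 0 < C) {y : E} (hy : ‖y‖ ≤ C) :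
    ‖L fun _ => y‖ ≤ C ^ Fintype.card κ * B := by
  have scaled : ‖C⁻¹ • y‖ ≤ 1 := by
    rw [norm_smul, norm_inv, Real.norm_of_nonneg hC.le]
    exact inv_mul_le_one_of_le₀ hy hC.le
  calc ‖L fun _ => y‖ = ‖L fun _ => C • C⁻¹ • y‖ := by simp only [smul_inv_smul₀ hC.ne']
    _ = C ^ Fintype.card κ * ‖L fun _ => C⁻¹ • y‖ := by
        rw [L.map_smul_univ fun _ => C]
        simp [norm_smul, abs_of_pos hC]
    _ ≤ C ^ Fintype.card κ * B := mul_le_mul_of_nonneg_left (hB _ scaled) (by positivity)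

lemma norm_map_sum_sign_smul_le (L : MultilinearMap ℝ (fun _ : κ => E) F) {B : ℝ}
    (hB : ∀ y, ‖y‖ ≤ 1 → ‖L fun _ => y‖ ≤ B) {x : κ → E} (hx : ∀ k, ‖x k‖ ≤ 1) (ε : κ → ℤˣ) :
    ‖L fun _ => ∑ k, ε k • x k‖ ≤ Fintype.card κ ^ Fintype.card κ * B := by
  obtain h | h := isEmpty_or_nonempty κ
  · simpa using hB 0 (by simp)
  have norm_sum : ‖∑ k, ε k • x k‖ ≤ Fintype.card κ :=
    calc ‖∑ k, ε k • x k‖ ≤ ∑ _ : κ, (1 : ℝ) := norm_sum_le_of_le _ fun k _ => by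
          obtain h | h := Int.units_eq_one_or (ε k) <;> simpa [h] using hx k
      _ = Fintype.card κ := by simp
  exact norm_map_const_le L hB (by positivity) norm_sum

theorem norm_permSum_le [DecidableEq κ] (L : MultilinearMap ℝ (fun _ : κ => E) F) {B : ℝ}
    (hB : ∀ y, ‖y‖ ≤ 1 → ‖L fun _ => y‖ ≤ B) {x : κ → E} (hx : ∀ k, ‖x k‖ ≤ 1) :
    ‖permSum L x‖ ≤ Fintype.card κ ^ Fintype.card κ * B := by
  refine le_of_mul_le_mul_left ?_ (by positivity : (0 : ℝ) < 2 ^ Fintype.card κ)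
  calc 2 ^ Fintype.card κ * ‖permSum L x‖
      = ‖∑ ε : κ → ℤˣ, (∏ k, ε k) • L fun _ => ∑ k, ε k • x k‖ := by
        rw [sum_prod_sign_smul_map_sum_sign_smul, ← Nat.cast_smul_eq_nsmul ℝ, norm_smul]
        simp
    _ ≤ ∑ _ : κ → ℤˣ, Fintype.card κ ^ Fintype.card κ * B := norm_sum_le_of_le _ fun ε _ => by
        obtain h | h := Int.units_eq_one_or (∏ k, ε k) <;>
          simpa [h] using norm_map_sum_sign_smul_le L hB hx ε
    _ = 2 ^ Fintype.card κ * (Fintype.card κ ^ Fintype.card κ * B) := by simp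

end PolarizationBound

section SupNorm

variable {n : ℕ} (P : MvPolynomial (Fin n) ℝ)

lemma bddAbove_abs_eval :
    BddAbove {y : ℝ | ∃ x : Fin n → ℝ, (∀ i, |x i| ≤ 1) ∧ y = |eval x P|} := by
  refine ⟨∑ α ∈ P.support, |coeff α P|, ?_⟩
  rintro y ⟨x, hx, rfl⟩
  rw [eval_eq]
  refine (Finset.abs_sum_le_sum_abs _ _).trans (Finset.sum_le_sum fun α _ => ?_)
  rw [abs_mul, Finset.abs_prod]
  refine mul_le_of_le_one_right (abs_nonneg _) (Finset.prod_le_one (fun _ _ => abs_nonneg _) ?_)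
  intro i _
  rw [abs_pow]
  exact pow_le_one₀ (abs_nonneg _) (hx i)

lemma abs_eval_le_supNorm {x : Fin n → ℝ} (hx : ∀ i, |x i| ≤ 1) : |eval x P| ≤ supNorm P :=
  le_csSup (bddAbove_abs_eval P) ⟨x, hx, rfl⟩

lemma supNorm_nonneg : 0 ≤ supNorm P :=
  Real.sSup_nonneg <| by
    rintro y ⟨x, _, rfl⟩
    exact abs_nonneg _

end SupNorm

section OrderedForm

lemma exists_sum_single_eq_of_degree_eq {σ : Type*} {m : ℕ} {α : σ →₀ ℕ} (h : α.degree = m) :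
    ∃ c : Fin m → σ, ∑ k, Finsupp.single (c k) 1 = α := by
  have card_eq : α.toMultiset.toList.length = m := by
    rw [Multiset.length_toList, Finsupp.card_toMultiset, ← h, Finsupp.degree_apply]
    rfl
  subst card_eq
  classical
  refine ⟨α.toMultiset.toList.get, Finsupp.orderIsoMultiset.injective ?_⟩
  simp only [Finsupp.coe_orderIsoMultiset]
  calc Finsupp.toMultiset (∑ k, Finsupp.single (α.toMultiset.toList.get k) 1)
      = (α.toMultiset.toList.map ({·} : σ → Multiset σ)).sum := by
        simp
    _ = α.toMultiset := by
        rw [← Multiset.sum_coe, ← Multiset.map_coe, Multiset.coe_toList,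
          Multiset.sum_map_singleton]

lemma eval_monomial_sum_single {σ R κ : Type*} [CommSemiring R] [Fintype κ] (c : κ → σ) (a : R)
    (x : σ → R) :
    eval x (monomial (∑ k, Finsupp.single (c k) 1) a) = a * ∏ k, x (c k) := by
  simp [monomial_sum_index, eval_monomial]

variable {σ R : Type*} [CommSemiring R] {m : ℕ} (P : MvPolynomial σ R) (c : P.support → Fin m → σ)

/-- The multilinear form `∑ α, a_α x₁(c α 1) ⋯ xₘ(c α m)`, which restricts to `P = ∑ α, a_α x^α`
on the diagonal when `c α` lists the variables of `x^α`. -/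
noncomputable def orderedForm : MultilinearMap R (fun _ : Fin m => σ → R) R :=
  ∑ α : P.support, coeff α.1 P •
    (MultilinearMap.mkPiAlgebra R (Fin m) R).compLinearMap fun k => LinearMap.proj (c α k)

lemma orderedForm_apply (x : Fin m → σ → R) :
    orderedForm P c x = ∑ α : P.support, coeff α.1 P * ∏ k, x k (c α k) := by
  simp [orderedForm]

variable {P c}

lemma orderedForm_diagonal (hc : ∀ α, ∑ k, Finsupp.single (c α k) 1 = α.1) (x : σ → R) :
    orderedForm P c (fun _ => x) = eval x P := by
  conv_rhs => rw [P.as_sum, map_sum, ← P.support.sum_coe_sort]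
  rw [orderedForm_apply]
  refine Finset.sum_congr rfl fun α _ => ?_
  rw [← eval_monomial_sum_single, hc]

variable [DecidableEq σ]

lemma orderedForm_single_comp (hc : ∀ α, ∑ k, Finsupp.single (c α k) 1 = α.1) (α : P.support)
    (τ : Equiv.Perm (Fin m)) :
    orderedForm P c (fun k => Pi.single (c α (τ k)) 1) =
      if c α ∘ τ = c α then coeff α.1 P else 0 := by
  have prod_single (β : P.support) :
      ∏ k, (Pi.single (c α (τ k)) 1 : σ → R) (c β k) = if c α ∘ τ = c β then 1 else 0 := by
    simp only [Pi.single_apply, Finset.prod_boole, Finset.mem_univ, true_imp_iff, funext_iff,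
      Function.comp_apply, eq_comm]
  have eq_of_comp_eq (β : P.support) (h : c α ∘ τ = c β) : β = α := by
    apply Subtype.ext
    rw [← hc α, ← hc β, ← h]
    exact Equiv.sum_comp τ fun k => Finsupp.single (c α k) 1
  rw [orderedForm_apply, Finset.sum_eq_single α]
  · simp [prod_single]
  · intro β _ hβ
    rw [prod_single, if_neg (mt (eq_of_comp_eq β) hβ), mul_zero]
  · simp

end OrderedForm

section PolynomialInequality

variable {m n : ℕ} {P : MvPolynomial (Fin n) ℝ} {c : P.support → Fin m → Fin n}

lemma abs_signEval_permSum_orderedForm_le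
    (hc : ∀ α, ∑ k, Finsupp.single (c α k) 1 = α.1) (ε : Fin m → Fin n → ℤˣ) :
    |signEval (permSum (orderedForm P c)) ε| ≤ m ^ m * supNorm P := by
  have bound_diagonal (y : Fin n → ℝ) (hy : ‖y‖ ≤ 1) :
      ‖orderedForm P c fun _ => y‖ ≤ supNorm P := by
    rw [orderedForm_diagonal hc]
    exact abs_eval_le_supNorm P fun i => (norm_le_pi_norm y i).trans hy
  have norm_sign_le (k : Fin m) : ‖fun j => ((ε k j : ℤ) : ℝ)‖ ≤ 1 :=
    (pi_norm_le_iff_of_nonneg zero_le_one).2 fun j => by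
      obtain h | h := Int.units_eq_one_or (ε k j) <;> simp [h]
  simpa [signEval] using norm_permSum_le (orderedForm P c) bound_diagonal norm_sign_le

lemma abs_coeff_le_abs_basisCoeff_permSum_orderedForm
    (hc : ∀ α, ∑ k, Finsupp.single (c α k) 1 = α.1) (α : P.support) :
    |coeff α.1 P| ≤ |basisCoeff (permSum (orderedForm P c)) (c α)| := by
  let stabilizer : Finset (Equiv.Perm (Fin m)) := {τ | c α ∘ τ = c α}
  have basisCoeff_eq :
      basisCoeff (permSum (orderedForm P c)) (c α) = stabilizer.card * coeff α.1 P := by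
    simp only [basisCoeff, permSum_apply, orderedForm_single_comp hc, ← Finset.sum_filter,
      Finset.sum_const, nsmul_eq_mul, stabilizer]
  have one_le_card : (1 : ℝ) ≤ stabilizer.card :=
    mod_cast Finset.card_pos.2 ⟨1, by simp [stabilizer]⟩
  rw [basisCoeff_eq, abs_mul, Nat.abs_cast]
  exact le_mul_of_one_le_left (abs_nonneg _) one_le_card

theorem lpNorm_le_mul_supNorm (hm : 0 < m) (hP : P.IsHomogeneous m) :
    lpNorm (2 * m / (m + 1)) P ≤ √3 ^ m * m ^ m * supNorm P := by
  have exists_listing (α : P.support) : ∃ c : Fin m → Fin n, ∑ k, Finsupp.single (c k) 1 = α.1 :=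
    exists_sum_single_eq_of_degree_eq <| by_contra fun h =>
      mem_support_iff.1 α.2 (hP.coeff_eq_zero h)
  choose c hc using exists_listing
  have c_injective : Function.Injective c := fun α β h => Subtype.ext <| by rw [← hc, ← hc, h]
  have bound_nonneg : 0 ≤ √3 ^ m * (m ^ m * supNorm P) := by
    have := supNorm_nonneg P
    positivity
  set p : ℝ := 2 * m / (m + 1)
  have p_pos : 0 < p := by positivity
  rw [lpNorm, one_div, mul_assoc]
  refine (Real.rpow_inv_le_iff_of_pos (by positivity) bound_nonneg p_pos).2 ?_
  calc ∑ α ∈ P.support, |coeff α P| ^ p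
      = ∑ α : P.support, |coeff α.1 P| ^ p := (Finset.sum_coe_sort _ _).symm
    _ ≤ ∑ α : P.support, |basisCoeff (permSum (orderedForm P c)) (c α)| ^ p := by
        refine Finset.sum_le_sum fun α _ => Real.rpow_le_rpow (abs_nonneg _) ?_ p_pos.le
        exact abs_coeff_le_abs_basisCoeff_permSum_orderedForm hc α
    _ ≤ ∑ i, |basisCoeff (permSum (orderedForm P c)) i| ^ p := by
        rw [← Finset.sum_image (g := c)
          (f := fun i => |basisCoeff (permSum (orderedForm P c)) i| ^ p) c_injective.injOn]
        exact Finset.sum_le_univ_sum_of_nonneg fun i => by positivity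
    _ ≤ (√3 ^ m * (m ^ m * supNorm P)) ^ p :=
        sum_abs_basisCoeff_rpow_le _ (abs_signEval_permSum_orderedForm_le hc)

end PolynomialInequality

section ExtremalPolynomial

lemma coeff_prod_sum_monomial {σ κ τ R : Type*} [Fintype κ] [Fintype τ] [CommSemiring R]
    {μ : κ → τ → σ →₀ ℕ} (a : κ → τ → R)
    (hμ : Function.Injective fun φ : κ → τ => ∑ k, μ k (φ k)) (φ : κ → τ) :
    coeff (∑ k, μ k (φ k)) (∏ k, ∑ t, monomial (μ k t) (a k t)) = ∏ k, a k (φ k) := by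
  classical
  rw [Fintype.prod_sum, coeff_sum, Finset.sum_eq_single φ]
  · rw [← monomial_sum_prod, coeff_monomial, if_pos rfl]
  · intro ψ _ h
    rw [← monomial_sum_prod, coeff_monomial, if_neg (hμ.ne h)]
  · simp

lemma card_rpow_le_lpNorm {κ : Type*} [Fintype κ] {n : ℕ} {P : MvPolynomial (Fin n) ℝ}
    {α : κ → Fin n →₀ ℕ} (hα : Function.Injective α) (hP : ∀ k, 1 ≤ |coeff (α k) P|)
    {p : ℝ} (hp : 0 ≤ p) :
    (Fintype.card κ : ℝ) ^ (1 / p) ≤ lpNorm p P := by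
  have mem_support (k : κ) : α k ∈ P.support :=
    mem_support_iff.2 <| abs_pos.1 <| zero_lt_one.trans_le (hP k)
  refine Real.rpow_le_rpow (by positivity) ?_ (by positivity)
  calc (Fintype.card κ : ℝ) = ∑ _k : κ, (1 : ℝ) := by simp
    _ ≤ ∑ k, |coeff (α k) P| ^ p :=
        Finset.sum_le_sum fun k _ => Real.one_le_rpow (hP k) hp
    _ = ∑ β ∈ Finset.univ.map ⟨α, hα⟩, |coeff β P| ^ p := by rw [Finset.sum_map]; rfl
    _ ≤ ∑ β ∈ P.support, |coeff β P| ^ p :=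
        Finset.sum_le_sum_of_subset_of_nonneg (by simpa [Finset.subset_iff] using mem_support)
          fun β _ _ => by positivity

lemma abs_sq_sub_sq_add_mul_le {a b : ℝ} (ha : |a| ≤ 1) (hb : |b| ≤ 1) :
    |a ^ 2 - b ^ 2 + a * b| ≤ 5 / 4 := by
  have ha2 : a ^ 2 ≤ 1 := (sq_le_one_iff_abs_le_one a).2 ha
  have hb2 : b ^ 2 ≤ 1 := (sq_le_one_iff_abs_le_one b).2 hb
  have lower : a ^ 2 - b ^ 2 + a * b = (a + b / 2) ^ 2 - 5 / 4 * b ^ 2 := by ring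
  have upper : a ^ 2 - b ^ 2 + a * b = 5 / 4 * a ^ 2 - (b - a / 2) ^ 2 := by ring
  rw [abs_le]
  constructor
  · linarith [lower, sq_nonneg (a + b / 2)]
  · linarith [upper, sq_nonneg (b - a / 2)]

variable (r : ℕ)

/-- The extremal polynomial `∏ j, (x_{2j-1}² - x_{2j}² + x_{2j-1} x_{2j})` of degree `2r`, with
`finProdFinEquiv (j, 0)` and `finProdFinEquiv (j, 1)` as the indices of `x_{2j-1}` and `x_{2j}`. -/
noncomputable def extremalPoly : MvPolynomial (Fin (r * 2)) ℝ :=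
  ∏ j : Fin r, (X (finProdFinEquiv (j, 0)) ^ 2 - X (finProdFinEquiv (j, 1)) ^ 2 +
    X (finProdFinEquiv (j, 0)) * X (finProdFinEquiv (j, 1)))

lemma isHomogeneous_extremalPoly : (extremalPoly r).IsHomogeneous (r * 2) := by
  have factor (u v : Fin (r * 2)) :
      (X u ^ 2 - X v ^ 2 + X u * X v : MvPolynomial (Fin (r * 2)) ℝ).IsHomogeneous 2 :=
    ((isHomogeneous_X_pow u 2).sub (isHomogeneous_X_pow v 2)).add
      ((isHomogeneous_X ℝ u).mul (isHomogeneous_X ℝ v))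
  simpa [extremalPoly] using
    IsHomogeneous.prod Finset.univ _ (fun _ : Fin r => 2) fun j _ => factor _ _

lemma supNorm_extremalPoly_le : supNorm (extremalPoly r) ≤ (5 / 4) ^ r := by
  refine Real.sSup_le ?_ (by positivity)
  rintro y ⟨x, hx, rfl⟩
  calc |eval x (extremalPoly r)|
      = ∏ j : Fin r, |x (finProdFinEquiv (j, 0)) ^ 2 - x (finProdFinEquiv (j, 1)) ^ 2 +
          x (finProdFinEquiv (j, 0)) * x (finProdFinEquiv (j, 1))| := by
        simp [extremalPoly, Finset.abs_prod]
    _ ≤ ∏ _j : Fin r, (5 / 4 : ℝ) :=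
        Finset.prod_le_prod (fun _ _ => abs_nonneg _) fun _ _ =>
          abs_sq_sub_sq_add_mul_le (hx _) (hx _)
    _ = (5 / 4) ^ r := by rw [Fin.prod_const]

variable {r}

/-- The exponents of the three monomials `u²`, `v²`, `uv` in the `j`-th factor of
`extremalPoly r`. -/
noncomputable def factorExponent (j : Fin r) (t : Fin 3) : Fin (r * 2) →₀ ℕ :=
  Finsupp.single (finProdFinEquiv (j, 0)) (![2, 0, 1] t) +
    Finsupp.single (finProdFinEquiv (j, 1)) (![0, 2, 1] t)

lemma sum_factorExponent_apply (φ : Fin r → Fin 3) (j : Fin r) :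
    (∑ i, factorExponent i (φ i)) (finProdFinEquiv (j, 0)) = ![2, 0, 1] (φ j) := by
  simp [factorExponent, Finsupp.single_apply]

lemma sum_factorExponent_injective :
    Function.Injective fun φ : Fin r → Fin 3 => ∑ j, factorExponent j (φ j) := by
  have vec_injective : Function.Injective (![2, 0, 1] : Fin 3 → ℕ) := by decide
  intro φ ψ h
  ext1 j
  apply vec_injective
  rw [← sum_factorExponent_apply, ← sum_factorExponent_apply]
  exact DFunLike.congr_fun h _

variable (r) in
lemma extremalPoly_eq_prod_sum_monomial :
    extremalPoly r = ∏ j, ∑ t, monomial (factorExponent j t) (![1, -1, 1] t) := by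
  refine Finset.prod_congr rfl fun j _ => ?_
  simp [Fin.sum_univ_three, factorExponent, X, monomial_pow, monomial_mul, sub_eq_add_neg]

lemma abs_coeff_extremalPoly (φ : Fin r → Fin 3) :
    |coeff (∑ j, factorExponent j (φ j)) (extremalPoly r)| = 1 := by
  have abs_sign (t : Fin 3) : |(![1, -1, 1] t : ℝ)| = 1 := by fin_cases t <;> simp
  rw [extremalPoly_eq_prod_sum_monomial, coeff_prod_sum_monomial _ sum_factorExponent_injective,
    Finset.abs_prod]
  exact Finset.prod_eq_one fun j _ => abs_sign _

variable (r) in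
lemma three_pow_rpow_le_lpNorm_extremalPoly {p : ℝ} (hp : 0 ≤ p) :
    ((3 : ℝ) ^ r) ^ (1 / p) ≤ lpNorm p (extremalPoly r) := by
  simpa using card_rpow_le_lpNorm sum_factorExponent_injective
    (fun φ => (abs_coeff_extremalPoly φ).ge) hp

end ExtremalPolynomial

/-- For every even positive integer `m`,
`D_{ℝ,m} ≥ (3^{m/2})^{(m+1)/(2m)} / (5/4)^{m/2}`. -/
theorem real_BH_lower_even (m : ℕ) (hm : 0 < m) (hme : Even m) :
    ((3 : ℝ) ^ (m / 2)) ^ (((m : ℝ) + 1) / (2 * m)) / (5 / 4 : ℝ) ^ (m / 2) ≤ BHconst m := by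
  have bound_pos : (0 : ℝ) < √3 ^ m * m ^ m := by positivity
  refine le_csInf ⟨_, bound_pos, fun n P hP => lpNorm_le_mul_supNorm hm hP⟩ ?_
  rintro D ⟨hD, hBH⟩
  have homogeneous : (extremalPoly (m / 2)).IsHomogeneous m := by
    simpa only [Nat.div_mul_cancel hme.two_dvd] using isHomogeneous_extremalPoly (m / 2)
  rw [div_le_iff₀ (by positivity)]
  calc ((3 : ℝ) ^ (m / 2)) ^ (((m : ℝ) + 1) / (2 * m))
      ≤ lpNorm (2 * m / (m + 1)) (extremalPoly (m / 2)) := by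
        rw [← one_div_div]
        exact three_pow_rpow_le_lpNorm_extremalPoly _ (by positivity)
    _ ≤ D * supNorm (extremalPoly (m / 2)) := hBH _ _ homogeneous
    _ ≤ D * (5 / 4) ^ (m / 2) := by
        gcongr
        exact supNorm_extremalPoly_le _
end
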